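/- arXiv:1511.00206 — 3 statements merged into one kernel-verified Lean document; each statement's English description precedes it below -/
import Mathlib

section
/- (Existence and uniqueness for rough differential equations.) Fix α ∈ (1/3, 1/2] and T > 0. Let ξ ∈ ℝ^e, let f : ℝ^e → L(ℝ^d, ℝ^e) be bounded with bounded first, second and third derivatives (f ∈ C³_b), and let 𝐗 = (X, 𝕏) be an α-Hölder rough path on [0,T] with values in ℝ^d. Then there exists a unique continuous path Y : [0,T] → ℝ^e such that the pair (Y, f∘Y) is controlled by X and for all t ∈ [0,T], Y_t = ξ + ∫_0^t f(Y_s) d𝐗_s, where the integral is the rough integral of the controlled path (f(Y), Df(Y)f(Y)), i.e. the limit as the mesh tends to 0 of the compensated Riemann sums Σ_{[u,v]∈𝒫} ( f(Y_u) X_{u,v} + Df(Y_u)f(Y_u) 𝕏_{u,v} ) over partitions 𝒫 of [0,t]. -/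
noncomputable section

open scoped BigOperators

/-- `ℝ^d` with the Euclidean norm. -/
abbrev Euc (d : ℕ) := EuclideanSpace ℝ (Fin d)

/-- The set of ratios `‖X_{s,t}‖ / (t-s)^α` over `0 ≤ s < t ≤ T`; its supremum is the
`α`-Hölder norm of the path `X` on `[0,T]`. -/
def holderRatios (α T : ℝ) {V : Type*} [NormedAddCommGroup V] (X : ℝ → V) : Set ℝ :=
  {r | ∃ s t : ℝ, 0 ≤ s ∧ s < t ∧ t ≤ T ∧ r = ‖X t - X s‖ / (t - s) ^ α}

/-- The set of ratios `‖𝕏_{s,t}‖ / |t-s|^{2α}` over `s ≠ t` in `[0,T]`; its supremum is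
the `2α`-Hölder norm of the two-parameter function `𝕏` on `[0,T]²`. -/
def holderRatios2 (α T : ℝ) {V : Type*} [NormedAddCommGroup V] (XX : ℝ → ℝ → V) : Set ℝ :=
  {r | ∃ s t : ℝ, 0 ≤ s ∧ 0 ≤ t ∧ s ≤ T ∧ t ≤ T ∧ s ≠ t ∧
    r = ‖XX s t‖ / |t - s| ^ (2 * α)}

/-- Contraction of a (continuous) bilinear map `B : ℝ^d × ℝ^d → ℝ^e` against a tensor
`M ∈ ℝ^{d×d}`, i.e. `Σ_{i,j} M^{ij} B(e_i, e_j)`. -/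
def contractTensor {d e : ℕ} (B : Euc d →L[ℝ] Euc d →L[ℝ] Euc e)
    (M : EuclideanSpace ℝ (Fin d × Fin d)) : Euc e :=
  ∑ i : Fin d, ∑ j : Fin d,
    M (i, j) • B (EuclideanSpace.single i (1 : ℝ)) (EuclideanSpace.single j (1 : ℝ))

/-- `Y : [0,T] → ℝ^e` solves the RDE `dY = f(Y) d𝐗`, `Y_0 = ξ`: `Y` is continuous,
`(Y, f∘Y)` is controlled by `X`, and for every `t ∈ [0,T]` the compensated Riemann sums
`Σ ( f(Y_u) X_{u,v} + Df(Y_u)f(Y_u) 𝕏_{u,v} )` over partitions of `[0,t]` converge to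
`Y_t - ξ` as the mesh tends to `0`. -/
def SolvesRDE (α T : ℝ) {d e : ℕ} (X : ℝ → Euc d)
    (XX : ℝ → ℝ → EuclideanSpace ℝ (Fin d × Fin d))
    (f : Euc e → (Euc d →L[ℝ] Euc e)) (ξ : Euc e) (Y : ℝ → Euc e) : Prop :=
  ContinuousOn Y (Set.Icc 0 T) ∧
  BddAbove (holderRatios α T (fun t => f (Y t))) ∧
  BddAbove (holderRatios2 α T (fun s t => Y t - Y s - (f (Y s)) (X t - X s))) ∧
  ∀ t ∈ Set.Icc (0 : ℝ) T, ∀ ε : ℝ, 0 < ε → ∃ δ : ℝ, 0 < δ ∧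
    ∀ (k : ℕ) (τ : ℕ → ℝ), τ 0 = 0 → τ k = t →
      (∀ i < k, τ i < τ (i + 1)) → (∀ i < k, τ (i + 1) - τ i ≤ δ) →
      ‖(∑ i ∈ Finset.range k,
          ((f (Y (τ i))) (X (τ (i + 1)) - X (τ i)) +
            contractTensor
              ((fderiv ℝ f (Y (τ i))).comp (f (Y (τ i))))
              (XX (τ i) (τ (i + 1))))) - (Y t - ξ)‖ ≤ ε

open Filter Topology


structure AlmostFlow {E : Type*} [NormedAddCommGroup E] (T α θ C : ℝ)
    (g : ℝ → ℝ → E → E) : Prop where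
  hT : 0 < T
  hα : 0 < α
  hθ : 1 < θ
  hC : 0 ≤ C
  b1 : ∀ s t x, 0 ≤ s → s ≤ t → t ≤ T → ‖g s t x‖ ≤ C * (t - s) ^ α
  b2 : ∀ s t x y, 0 ≤ s → s ≤ t → t ≤ T → ‖g s t x - g s t y‖ ≤ C * (t - s) ^ α * ‖x - y‖
  b3 : ∀ s t p q i, 0 ≤ s → s ≤ t → t ≤ T →
    ‖g s t (p + i) - g s t p - (g s t (q + i) - g s t q)‖ ≤ C * ‖i‖ * ‖p - q‖
  b4 : ∀ s u t x, 0 ≤ s → s ≤ u → u ≤ t → t ≤ T →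
    ‖g s u x + g u t (x + g s u x) - g s t x‖ ≤ C * (t - s) ^ θ
  b5 : ∀ s u t x y, 0 ≤ s → s ≤ u → u ≤ t → t ≤ T →
    ‖(g s u x + g u t (x + g s u x) - g s t x) - (g s u y + g u t (y + g s u y) - g s t y)‖
      ≤ C * (t - s) ^ θ * ‖x - y‖

namespace AlmostFlow
variable {E : Type*} [NormedAddCommGroup E] {T α θ C : ℝ} {g : ℝ → ℝ → E → E}

/-- the local error of a path -/
def err (g : ℝ → ℝ → E → E) (y : ℝ → E) (s t : ℝ) : E := y t - y s - g s t (y s)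

lemma g_self (H : AlmostFlow T α θ C g) (s : ℝ) (x : E) (h0 : 0 ≤ s) (h1 : s ≤ T) :
    g s s x = 0 := by
  have := H.b1 s s x h0 le_rfl h1
  rw [sub_self, Real.zero_rpow H.hα.ne', mul_zero] at this
  simpa using this

lemma err_self (H : AlmostFlow T α θ C g) (y : ℝ → E) (s : ℝ) (h0 : 0 ≤ s) (h1 : s ≤ T) :
    err g y s s = 0 := by
  simp [err, H.g_self s _ h0 h1]

lemma err_split (H : AlmostFlow T α θ C g) (y : ℝ → E) (s u t : ℝ) (h0 : 0 ≤ s) (h1 : s ≤ u)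
    (h2 : u ≤ t) (h3 : t ≤ T) :
    ‖err g y s t‖ ≤ ‖err g y u t‖ + (1 + C * (t - s) ^ α) * ‖err g y s u‖
      + C * (t - s) ^ θ := by
  have e : err g y s t = err g y u t + err g y s u
      + (g u t (y u) - g u t (y s + g s u (y s)))
      + (g s u (y s) + g u t (y s + g s u (y s)) - g s t (y s)) := by
    simp only [err]; abel
  have e2 : y u - (y s + g s u (y s)) = err g y s u := by simp only [err]; abel
  have k1 := H.b2 u t (y u) (y s + g s u (y s)) (h0.trans h1) h2 h3
  rw [e2] at k1
  have k2 := H.b4 s u t (y s) h0 h1 h2 h3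
  have k3 : (t - u) ^ α ≤ (t - s) ^ α :=
    Real.rpow_le_rpow (by linarith) (by linarith) H.hα.le
  have k4 : C * (t - u) ^ α * ‖err g y s u‖ ≤ C * (t - s) ^ α * ‖err g y s u‖ := by
    have := H.hC
    gcongr
  rw [e]
  refine (norm_add_le _ _).trans ?_
  have := norm_add_le (err g y u t + err g y s u) (g u t (y u) - g u t (y s + g s u (y s)))
  have := norm_add_le (err g y u t) (err g y s u)
  linarith

lemma err_split3 (H : AlmostFlow T α θ C g) (y : ℝ → E) (s u v t M : ℝ) (h0 : 0 ≤ s) (h1 : s ≤ u)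
    (h2 : u ≤ v) (h2' : v ≤ t) (h3 : t ≤ T) (hz : err g y u v = 0) (hM : C * (t - s) ^ α ≤ M) :
    ‖err g y s t‖ ≤ ‖err g y v t‖ + (1 + M) ^ 2 * ‖err g y s u‖
      + (2 + M) * C * (t - s) ^ θ := by
  have a := H.err_split y s v t h0 (h1.trans h2) h2' h3
  have b := H.err_split y s u v h0 h1 h2 (h2'.trans h3)
  rw [hz, norm_zero, zero_add] at b
  have hC := H.hC
  have k3 : C * (v - s) ^ α ≤ M :=
    (mul_le_mul_of_nonneg_left (Real.rpow_le_rpow (by linarith) (by linarith) H.hα.le) hC).trans hM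
  have k4 : (v - s) ^ θ ≤ (t - s) ^ θ :=
    Real.rpow_le_rpow (by linarith) (by linarith) (by linarith [H.hθ])
  have hM0 : 0 ≤ M := le_trans (mul_nonneg hC (Real.rpow_nonneg (by linarith) _)) hM
  have b' : ‖err g y s v‖ ≤ (1 + M) * ‖err g y s u‖ + C * (t - s) ^ θ := by
    refine b.trans ?_
    gcongr
  have a' : ‖err g y s t‖ ≤ ‖err g y v t‖ + (1 + M) * ((1 + M) * ‖err g y s u‖ + C * (t - s) ^ θ)
      + C * (t - s) ^ θ := by
    refine a.trans ?_
    gcongr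
  refine a'.trans (le_of_eq ?_)
  ring

/-- Euler scheme on a finite set of times -/
def IsEuler (T : ℝ) (g : ℝ → ℝ → E → E) (P : Finset ℝ) (y : ℝ → E) : Prop :=
  (∀ s ∈ P, 0 ≤ s ∧ s ≤ T) ∧
  ∀ s ∈ P, ∀ t ∈ P, s < t → (∀ r ∈ P, r ≤ s ∨ t ≤ r) → err g y s t = 0

lemma exists_euler (g : ℝ → ℝ → E → E) (ξ : E) (P : Finset ℝ) :
    (∀ s ∈ P, 0 ≤ s ∧ s ≤ T) → ∃ y, y 0 = ξ ∧ IsEuler T g P y := by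
  induction P using Finset.induction_on_max with
  | empty => intro _; exact ⟨fun _ => ξ, rfl, by simp [IsEuler]⟩
  | insert a P ha ih =>
    intro hP
    obtain ⟨y, y0, hy, hy2⟩ := ih (fun s hs => hP s (Finset.mem_insert_of_mem hs))
    rcases P.eq_empty_or_nonempty with rfl | hne
    · refine ⟨fun _ => ξ, rfl, hP, ?_⟩
      intro s hs t ht hst
      simp at hs ht
      subst hs ht
      exact absurd hst (lt_irrefl _)
    · set b := P.max' hne with hb
      have hbP : b ∈ P := P.max'_mem hne
      have hba : b < a := ha b hbP
      have haP : ∀ x ∈ P, x ≠ a := fun x hx => (ha x hx).ne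
      refine ⟨Function.update y a (y b + g b a (y b)), ?_, hP, ?_⟩
      · have : (0:ℝ) ≠ a := by
          have := (hy b hbP).1
          intro h; linarith
        rw [Function.update_of_ne this, y0]
      · intro s hs t ht hst hr
        rw [Finset.mem_insert] at hs ht
        have hsP : s ∈ P := by
          rcases hs with rfl | hs
          · rcases ht with rfl | ht
            · exact absurd hst (lt_irrefl _)
            · exact absurd hst (not_lt.2 (ha t ht).le)
          · exact hs
        rcases ht with rfl | ht
        · have : s = b := by
            rcases hr b (Finset.mem_insert_of_mem hbP) with h | h
            · exact le_antisymm (P.le_max' s hsP) h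
            · exact absurd h (not_le.2 hba)
          subst this
          simp only [err, Function.update_self, Function.update_of_ne (haP _ hsP)]
          abel
        · have := hy2 s hsP t ht hst (fun r hr' => hr r (Finset.mem_insert_of_mem hr'))
          simpa only [err, Function.update_of_ne (haP _ hsP), Function.update_of_ne (haP _ ht)]
            using this

lemma euler_mid {P : Finset ℝ} {y : ℝ → E} (hy : IsEuler T g P y) {s t : ℝ} (hs : s ∈ P)
    (ht : t ∈ P) (hst : s < t) : ∃ u ∈ P, ∃ v ∈ P, s ≤ u ∧ u < v ∧ v ≤ t ∧ u < t ∧ s < v ∧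
      u - s ≤ (t - s) / 2 ∧ t - v ≤ (t - s) / 2 ∧ err g y u v = 0 := by
  have h1 : (P.filter (fun r => r ≤ (s + t) / 2)).Nonempty :=
    ⟨s, Finset.mem_filter.2 ⟨hs, by linarith⟩⟩
  have h2 : (P.filter (fun r => (s + t) / 2 < r)).Nonempty :=
    ⟨t, Finset.mem_filter.2 ⟨ht, by linarith⟩⟩
  have hu := Finset.mem_filter.1 (Finset.max'_mem _ h1)
  have hv := Finset.mem_filter.1 (Finset.min'_mem _ h2)
  have hsu := Finset.le_max' _ s (Finset.mem_filter.2 ⟨hs, by linarith⟩ : s ∈ P.filter (fun r => r ≤ (s + t) / 2))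
  have hvt := Finset.min'_le _ t (Finset.mem_filter.2 ⟨ht, by linarith⟩ : t ∈ P.filter (fun r => (s + t) / 2 < r))
  set u := Finset.max' _ h1 with hu'
  set v := Finset.min' _ h2 with hv'
  refine ⟨u, hu.1, v, hv.1, hsu, by linarith [hu.2, hv.2], hvt, by linarith [hu.2],
    by linarith [hv.2], by linarith [hu.2], by linarith [hv.2], ?_⟩
  refine hy.2 u hu.1 v hv.1 (by linarith [hu.2, hv.2]) (fun r hr => ?_)
  rcases le_or_gt r ((s + t) / 2) with h | h
  · left; exact Finset.le_max' _ _ (Finset.mem_filter.2 ⟨hr, h⟩)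
  · right; exact Finset.min'_le _ _ (Finset.mem_filter.2 ⟨hr, h⟩)

lemma half_rpow {h x θ : ℝ} (hx : 0 ≤ x) (hh : 0 ≤ h) (hθ : 0 ≤ θ) (hxh : x ≤ h / 2) :
    x ^ θ ≤ (1 / 2 : ℝ) ^ θ * h ^ θ := by
  rw [← Real.mul_rpow (by norm_num) hh]
  exact Real.rpow_le_rpow hx (by linarith) hθ

lemma half_lt (H : AlmostFlow T α θ C g) : 2 * (1 / 2 : ℝ) ^ θ < 1 := by
  have : (1 / 2 : ℝ) ^ θ < (1 / 2 : ℝ) ^ (1 : ℝ) :=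
    Real.rpow_lt_rpow_of_exponent_gt (by norm_num) (by norm_num) H.hθ
  rw [Real.rpow_one] at this
  linarith

lemma exists_small (H : AlmostFlow T α θ C g) (C' : ℝ) : ∃ h0 : ℝ, 0 < h0 ∧
    (1 + (1 + C * h0 ^ α) ^ 2) * (1 / 2 : ℝ) ^ θ < 1 ∧
    (2 + C * h0 ^ α) * (1 / 2 : ℝ) ^ θ + C' * h0 ^ θ < 1 := by
  have c1 : ContinuousAt (fun h : ℝ => h ^ α) 0 :=
    Real.continuousAt_rpow_const _ _ (Or.inr H.hα.le)
  have c2 : ContinuousAt (fun h : ℝ => h ^ θ) 0 :=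
    Real.continuousAt_rpow_const _ _ (Or.inr (by linarith [H.hθ]))
  have c3 : ContinuousAt (fun h0 : ℝ => (1 + (1 + C * h0 ^ α) ^ 2) * (1 / 2 : ℝ) ^ θ) 0 := by
    fun_prop
  have c4 : ContinuousAt (fun h0 : ℝ => (2 + C * h0 ^ α) * (1 / 2 : ℝ) ^ θ + C' * h0 ^ θ) 0 := by
    fun_prop
  have z1 : (0 : ℝ) ^ α = 0 := Real.zero_rpow H.hα.ne'
  have z2 : (0 : ℝ) ^ θ = 0 := Real.zero_rpow (by linarith [H.hθ])
  have hl := H.half_lt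
  have v3 : (1 + (1 + C * (0:ℝ) ^ α) ^ 2) * (1 / 2 : ℝ) ^ θ < 1 := by
    simp only [z1, mul_zero, add_zero, one_pow]; linarith
  have v4 : (2 + C * (0:ℝ) ^ α) * (1 / 2 : ℝ) ^ θ + C' * (0:ℝ) ^ θ < 1 := by
    simp only [z1, z2, mul_zero, add_zero]; linarith
  have e3 := c3.eventually (gt_mem_nhds v3)
  have e4 := c4.eventually (gt_mem_nhds v4)
  have e5 : ∀ᶠ h in 𝓝[>] (0:ℝ), 0 < h := eventually_mem_nhdsWithin
  obtain ⟨h, ⟨h3, h4⟩, h5⟩ := (((e3.and e4).filter_mono nhdsWithin_le_nhds).and e5).exists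
  exact ⟨h, h5, h3, h4⟩

lemma apriori_small (H : AlmostFlow T α θ C g) : ∃ h0 : ℝ, 0 < h0 ∧ ∃ K : ℝ, 0 ≤ K ∧
    ∀ (P : Finset ℝ) (y : ℝ → E), IsEuler T g P y → ∀ s ∈ P, ∀ t ∈ P, s ≤ t → t - s ≤ h0 →
      ‖err g y s t‖ ≤ K * (t - s) ^ θ := by
  obtain ⟨h0, hh0, hs1, -⟩ := H.exists_small 0
  have hC := H.hC
  have hθ := H.hθ
  set M := C * h0 ^ α with hM
  have hM0 : 0 ≤ M := mul_nonneg hC (Real.rpow_nonneg hh0.le _)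
  set κ := (1 + (1 + M) ^ 2) * (1 / 2 : ℝ) ^ θ with hκ
  set K := (2 + M) * C / (1 - κ) with hK
  have hK0 : 0 ≤ K := div_nonneg (by positivity) (by linarith)
  have hKe : κ * K + (2 + M) * C = K := by
    have : (1 - κ) * K = (2 + M) * C := by rw [hK]; field_simp [show (1 - κ) ≠ 0 by linarith]
    linarith
  refine ⟨h0, hh0, K, hK0, ?_⟩
  intro P y hy
  have key : ∀ n : ℕ, ∀ s ∈ P, ∀ t ∈ P, s ≤ t → t - s ≤ h0 →
      (P.filter (fun r => s ≤ r ∧ r ≤ t)).card ≤ n → ‖err g y s t‖ ≤ K * (t - s) ^ θ := by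
    intro n
    induction n with
    | zero =>
      intro s hs t ht hst _ hc
      have : s ∈ P.filter (fun r => s ≤ r ∧ r ≤ t) := Finset.mem_filter.2 ⟨hs, le_rfl, hst⟩
      simp only [Nat.le_zero, Finset.card_eq_zero] at hc
      rw [hc] at this
      simp at this
    | succ n ih =>
      intro s hs t ht hst hh hc
      rcases hst.eq_or_lt with rfl | hlt
      · rw [H.err_self y s (hy.1 s hs).1 (hy.1 s hs).2]
        simp only [norm_zero, sub_self]
        exact mul_nonneg hK0 (Real.rpow_nonneg le_rfl _)
      obtain ⟨u, hu, v, hv, h1, h2, h3, h4, h5, h6, h7, hz⟩ := euler_mid hy hs ht hlt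
      have i1 := ih s hs u hu h1 (by linarith) (by
        have : (P.filter (fun r => s ≤ r ∧ r ≤ u)) ⊂ (P.filter (fun r => s ≤ r ∧ r ≤ t)) := by
          refine Finset.ssubset_iff_of_subset (fun x hx => ?_) |>.2 ⟨t, ?_, ?_⟩
          · simp only [Finset.mem_filter] at hx ⊢
            exact ⟨hx.1, hx.2.1, by linarith [hx.2.2]⟩
          · simp [ht, hst]
          · simp [h4]
        have := Finset.card_lt_card this
        omega)
      have i2 := ih v hv t ht h3 (by linarith) (by
        have : (P.filter (fun r => v ≤ r ∧ r ≤ t)) ⊂ (P.filter (fun r => s ≤ r ∧ r ≤ t)) := by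
          refine Finset.ssubset_iff_of_subset (fun x hx => ?_) |>.2 ⟨s, ?_, ?_⟩
          · simp only [Finset.mem_filter] at hx ⊢
            exact ⟨hx.1, by linarith [hx.2.1], hx.2.2⟩
          · simp [hs, hst]
          · simp [h5]
        have := Finset.card_lt_card this
        omega)
      have k := H.err_split3 y s u v t M (hy.1 s hs).1 h1 h2.le h3 (hy.1 t ht).2 hz
        (mul_le_mul_of_nonneg_left (Real.rpow_le_rpow (by linarith) hh H.hα.le) hC)
      have j1 := half_rpow (x := u - s) (h := t - s) (θ := θ) (by linarith) (by linarith)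
        (by linarith) h6
      have j2 := half_rpow (x := t - v) (h := t - s) (θ := θ) (by linarith) (by linarith)
        (by linarith) h7
      calc ‖err g y s t‖ ≤ K * ((1 / 2 : ℝ) ^ θ * (t - s) ^ θ)
            + (1 + M) ^ 2 * (K * ((1 / 2 : ℝ) ^ θ * (t - s) ^ θ)) + (2 + M) * C * (t - s) ^ θ := by
            refine k.trans ?_
            gcongr
            · exact i2.trans (by gcongr)
            · exact i1.trans (by gcongr)
        _ = (κ * K + (2 + M) * C) * (t - s) ^ θ := by rw [hκ]; ring
        _ = _ := by rw [hKe]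
  intro s hs t ht hst hh
  exact key _ s hs t ht hst hh le_rfl

lemma apriori (H : AlmostFlow T α θ C g) : ∃ K : ℝ, 0 ≤ K ∧
    ∀ (P : Finset ℝ) (y : ℝ → E), IsEuler T g P y → ∀ s ∈ P, ∀ t ∈ P, s ≤ t →
      ‖err g y s t‖ ≤ K * (t - s) ^ θ := by
  obtain ⟨h0, hh0, K, hK0, hK⟩ := H.apriori_small
  have hC := H.hC
  have hθ := H.hθ
  set M := C * T ^ α with hM
  have hM0 : 0 ≤ M := mul_nonneg hC (Real.rpow_nonneg H.hT.le _)
  have key : ∀ n : ℕ, ∃ K : ℝ, 0 ≤ K ∧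
    ∀ (P : Finset ℝ) (y : ℝ → E), IsEuler T g P y → ∀ s ∈ P, ∀ t ∈ P, s ≤ t →
      t - s ≤ 2 ^ n * h0 → ‖err g y s t‖ ≤ K * (t - s) ^ θ := by
    intro n
    induction n with
    | zero => exact ⟨K, hK0, by simpa using hK⟩
    | succ n ih =>
      obtain ⟨K, hK0, hK⟩ := ih
      refine ⟨(1 + (1 + M) ^ 2) * (1 / 2 : ℝ) ^ θ * K + (2 + M) * C, by positivity, ?_⟩
      intro P y hy s hs t ht hst hh
      rcases hst.eq_or_lt with rfl | hlt
      · rw [H.err_self y s (hy.1 s hs).1 (hy.1 s hs).2]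
        simp only [norm_zero, sub_self]
        exact mul_nonneg (by positivity) (Real.rpow_nonneg le_rfl _)
      obtain ⟨u, hu, v, hv, h1, h2, h3, h4, h5, h6, h7, hz⟩ := euler_mid hy hs ht hlt
      rw [pow_succ] at hh
      have i1 := hK P y hy s hs u hu h1 (by linarith)
      have i2 := hK P y hy v hv t ht h3 (by linarith)
      have hb := (hy.1 t ht).2
      have hb' := (hy.1 s hs).1
      have k := H.err_split3 y s u v t M (hy.1 s hs).1 h1 h2.le h3 (hy.1 t ht).2 hz
        (mul_le_mul_of_nonneg_left (Real.rpow_le_rpow (by linarith) (by linarith) H.hα.le) hC)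
      have j1 := half_rpow (x := u - s) (h := t - s) (θ := θ) (by linarith) (by linarith)
        (by linarith) h6
      have j2 := half_rpow (x := t - v) (h := t - s) (θ := θ) (by linarith) (by linarith)
        (by linarith) h7
      calc ‖err g y s t‖ ≤ K * ((1 / 2 : ℝ) ^ θ * (t - s) ^ θ)
            + (1 + M) ^ 2 * (K * ((1 / 2 : ℝ) ^ θ * (t - s) ^ θ)) + (2 + M) * C * (t - s) ^ θ := by
            refine k.trans ?_
            gcongr
            · exact i2.trans (by gcongr)
            · exact i1.trans (by gcongr)
        _ = _ := by ring
  obtain ⟨n, hn⟩ := pow_unbounded_of_one_lt (T / h0) (one_lt_two)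
  obtain ⟨K, hK0, hK⟩ := key n
  refine ⟨K, hK0, fun P y hy s hs t ht hst => hK P y hy s hs t ht hst ?_⟩
  rw [div_lt_iff₀ hh0] at hn
  linarith [(hy.1 t ht).2, (hy.1 s hs).1]

theorem exists_solution [ProperSpace E] (H : AlmostFlow T α θ C g) (ξ : E) :
    ∃ Y : ℝ → E, Y 0 = ξ ∧ ∃ K : ℝ, 0 ≤ K ∧ ∀ s t, 0 ≤ s → s ≤ t → t ≤ T →
      ‖err g Y s t‖ ≤ K * (t - s) ^ θ := by
  obtain ⟨K, hK0, hK⟩ := H.apriori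
  let Q : Finset ℝ → Finset ℝ := fun P => insert 0 (P.filter (fun r => 0 ≤ r ∧ r ≤ T))
  have hQ : ∀ P, ∀ s ∈ Q P, 0 ≤ s ∧ s ≤ T := by
    intro P s hs
    simp only [Q, Finset.mem_insert, Finset.mem_filter] at hs
    rcases hs with rfl | hs
    · exact ⟨le_rfl, H.hT.le⟩
    · exact hs.2
  choose y hy0 hy using fun P => exists_euler (T := T) g ξ (Q P) (hQ P)
  have h0Q : ∀ P, (0:ℝ) ∈ Q P := fun P => Finset.mem_insert_self _ _
  let U : Ultrafilter (Finset ℝ) := Ultrafilter.of atTop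
  have hU : (U : Filter (Finset ℝ)) ≤ atTop := Ultrafilter.of_le _
  have hmem : ∀ t, 0 ≤ t → t ≤ T → ∀ᶠ P in (U : Filter (Finset ℝ)), t ∈ Q P := by
    intro t h0 h1
    refine hU ?_
    filter_upwards [eventually_ge_atTop ({t} : Finset ℝ)] with P hP
    have : t ∈ P := hP (Finset.mem_singleton_self t)
    simp [Q, this, h0, h1]
  have hlim : ∀ t, ∃ z, 0 ≤ t → t ≤ T → Tendsto (fun P => y P t) U (𝓝 z) := by
    intro t
    by_cases ht : 0 ≤ t ∧ t ≤ T
    · have hb : ∀ᶠ P in (U : Filter (Finset ℝ)),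
          y P t ∈ Metric.closedBall ξ (K * t ^ θ + C * t ^ α) := by
        filter_upwards [hmem t ht.1 ht.2] with P hP
        have := hK (Q P) (y P) (hy P) 0 (h0Q P) t hP ht.1
        have h2 := H.b1 0 t ξ le_rfl ht.1 ht.2
        rw [sub_zero] at this h2
        rw [err, hy0 P] at this
        rw [mem_closedBall_iff_norm]
        have h3 : y P t - ξ = (y P t - ξ - g 0 t ξ) + g 0 t ξ := by abel
        rw [h3]
        exact (norm_add_le _ _).trans (by linarith)
      obtain ⟨z, -, hz⟩ := (isCompact_closedBall ξ (K * t ^ θ + C * t ^ α)).ultrafilter_le_nhds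
        (U.map (fun P => y P t)) (le_principal_iff.2 hb)
      exact ⟨z, fun _ _ => hz⟩
    · exact ⟨ξ, fun h h' => absurd ⟨h, h'⟩ ht⟩
  choose Y hY using hlim
  refine ⟨Y, ?_, K, hK0, ?_⟩
  · have := hY 0 le_rfl H.hT.le
    simp only [hy0] at this
    exact tendsto_nhds_unique this tendsto_const_nhds
  · intro s t h0 hst ht
    have ts := hY s h0 (hst.trans ht)
    have tt := hY t (h0.trans hst) ht
    have hg : Continuous (g s t) := by
      have : LipschitzWith (C * (t - s) ^ α).toNNReal (g s t) := by
        refine LipschitzWith.of_dist_le_mul fun x z => ?_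
        rw [dist_eq_norm, dist_eq_norm, Real.coe_toNNReal _
          (mul_nonneg H.hC (Real.rpow_nonneg (by linarith) _))]
        exact H.b2 s t x z h0 hst ht
      exact this.continuous
    have tg := (hg.tendsto (Y s)).comp ts
    have := ((tt.sub ts).sub tg).norm
    refine le_of_tendsto this ?_
    filter_upwards [hmem s h0 (hst.trans ht), hmem t (h0.trans hst) ht] with P h1 h2
    exact hK (Q P) (y P) (hy P) s h1 t h2 hst

lemma unique_step (H : AlmostFlow T α θ C g) {Y Z : ℝ → E} {K : ℝ} (hK : 0 ≤ K)
    (hY : ∀ s t, 0 ≤ s → s ≤ t → t ≤ T → ‖err g Y s t‖ ≤ K * (t - s) ^ θ)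
    (hZ : ∀ s t, 0 ≤ s → s ≤ t → t ≤ T → ‖err g Z s t‖ ≤ K * (t - s) ^ θ)
    (s u t : ℝ) (h0 : 0 ≤ s) (h1 : s ≤ u) (h2 : u ≤ t) (h3 : t ≤ T) :
    ‖err g Z s t - err g Y s t‖ ≤ ‖err g Z u t - err g Y u t‖
      + (1 + C * (t - s) ^ α) * ‖err g Z s u - err g Y s u‖
      + (C * K * (1 + C * T ^ α) + C) * (t - s) ^ θ * ‖Z s - Y s‖ := by
  have hC := H.hC
  set p := Z s + g s u (Z s) with hp
  set q := Y s + g s u (Y s) with hq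
  set i := err g Z s u with hi
  set j := err g Y s u with hj
  have e1 : Z u = p + i := by simp only [hp, hi, err]; abel
  have e2 : Y u = q + j := by simp only [hq, hj, err]; abel
  have e : err g Z s t - err g Y s t = (err g Z u t - err g Y u t) + (i - j)
      + (g u t (p + i) - g u t p - (g u t (q + i) - g u t q))
      + (g u t (q + i) - g u t (q + j))
      + ((g s u (Z s) + g u t p - g s t (Z s)) - (g s u (Y s) + g u t q - g s t (Y s))) := by
    rw [← e1, ← e2]; simp only [hi, hj, err]; abel
  have k1 := H.b3 u t p q i (h0.trans h1) h2 h3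
  have k2 := H.b2 u t (q + i) (q + j) (h0.trans h1) h2 h3
  have k3 := H.b5 s u t (Z s) (Y s) h0 h1 h2 h3
  rw [add_sub_add_left_eq_sub] at k2
  have r1 : (t - u) ^ α ≤ (t - s) ^ α :=
    Real.rpow_le_rpow (by linarith) (by linarith) H.hα.le
  have r2 : (u - s) ^ θ ≤ (t - s) ^ θ :=
    Real.rpow_le_rpow (by linarith) (by linarith) (by linarith [H.hθ])
  have r3 : (u - s) ^ α ≤ T ^ α :=
    Real.rpow_le_rpow (by linarith) (by linarith) H.hα.le
  have k2' : ‖g u t (q + i) - g u t (q + j)‖ ≤ C * (t - s) ^ α * ‖i - j‖ :=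
    k2.trans (by gcongr)
  have hpq : ‖p - q‖ ≤ (1 + C * T ^ α) * ‖Z s - Y s‖ := by
    have a1 := H.b2 s u (Z s) (Y s) h0 h1 (h2.trans h3)
    have a2 : p - q = (Z s - Y s) + (g s u (Z s) - g s u (Y s)) := by
      simp only [hp, hq]; abel
    rw [a2]
    have a3 : C * (u - s) ^ α * ‖Z s - Y s‖ ≤ C * T ^ α * ‖Z s - Y s‖ := by gcongr
    refine (norm_add_le _ _).trans ?_
    linarith
  have hi' : ‖i‖ ≤ K * (t - s) ^ θ :=
    (hZ s u h0 h1 (h2.trans h3)).trans (by gcongr)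
  have hT := H.hT
  have k1' : ‖g u t (p + i) - g u t p - (g u t (q + i) - g u t q)‖ ≤
      C * (K * (t - s) ^ θ) * ((1 + C * T ^ α) * ‖Z s - Y s‖) := by
    refine k1.trans ?_
    have : 0 ≤ (t - s) ^ θ := Real.rpow_nonneg (by linarith) _
    gcongr
  rw [e]
  refine (norm_add_le _ _).trans ?_
  refine (add_le_add_left ((norm_add_le _ _).trans (add_le_add_left ((norm_add_le _ _).trans
    (add_le_add_left (norm_add_le _ _) _)) _)) _).trans ?_
  nlinarith [k1', k2', k3]

theorem unique_local (H : AlmostFlow T α θ C g) {Y Z : ℝ → E} {K : ℝ} (hK : 0 ≤ K)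
    (hY : ∀ s t, 0 ≤ s → s ≤ t → t ≤ T → ‖err g Y s t‖ ≤ K * (t - s) ^ θ)
    (hZ : ∀ s t, 0 ≤ s → s ≤ t → t ≤ T → ‖err g Z s t‖ ≤ K * (t - s) ^ θ) :
    ∃ h0 : ℝ, 0 < h0 ∧ ∀ a, 0 ≤ a → Z a = Y a → ∀ t, a ≤ t → t ≤ T → t ≤ a + h0 →
      Z t = Y t := by
  have hC := H.hC
  have hθ := H.hθ
  set C' := C * K * (1 + C * T ^ α) + C with hC'
  have hT := H.hT
  have hC'0 : 0 ≤ C' := by positivity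
  obtain ⟨h0, hh0, -, hs⟩ := H.exists_small C'
  refine ⟨h0, hh0, ?_⟩
  intro a ha hZY
  set κ := (2 + C * h0 ^ α) * (1 / 2 : ℝ) ^ θ + C' * h0 ^ θ with hκ
  have hκ0 : 0 ≤ κ := by positivity
  have hJ : ∀ t, Z t - Y t = err g Z a t - err g Y a t := by
    intro t; simp only [err, hZY]; abel
  have key : ∀ n : ℕ, ∀ s t, a ≤ s → s ≤ t → t ≤ T → t ≤ a + h0 →
      ‖err g Z s t - err g Y s t‖ ≤ κ ^ n * (2 * K) * (t - s) ^ θ := by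
    intro n
    induction n with
    | zero =>
      intro s t h1 h2 h3 _
      have := hY s t (ha.trans h1) h2 h3
      have := hZ s t (ha.trans h1) h2 h3
      refine (norm_sub_le _ _).trans ?_
      simp only [pow_zero]
      linarith
    | succ n ih =>
      intro s t h1 h2 h3 h4
      set B := κ ^ n * (2 * K) with hB
      have hB0 : 0 ≤ B := by positivity
      have k := H.unique_step hK hY hZ s ((s + t) / 2) t (ha.trans h1) (by linarith)
        (by linarith) h3
      have i1 := ih s ((s + t) / 2) h1 (by linarith) (by linarith) (by linarith)
      have i2 := ih ((s + t) / 2) t (by linarith) (by linarith) h3 h4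
      have i3 := ih a s le_rfl h1 (by linarith) (by linarith)
      rw [← hJ s] at i3
      have j1 := half_rpow (x := (s + t) / 2 - s) (h := t - s) (θ := θ) (by linarith)
        (by linarith) (by linarith) (by linarith)
      have j2 := half_rpow (x := t - (s + t) / 2) (h := t - s) (θ := θ) (by linarith)
        (by linarith) (by linarith) (by linarith)
      have j3 : (s - a) ^ θ ≤ h0 ^ θ :=
        Real.rpow_le_rpow (by linarith) (by linarith) (by linarith)
      have j4 : (t - s) ^ α ≤ h0 ^ α :=
        Real.rpow_le_rpow (by linarith) (by linarith) H.hα.le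
      have hn : 0 ≤ (t - s) ^ θ := Real.rpow_nonneg (by linarith) _
      calc _ ≤ _ := k
        _ ≤ B * ((1 / 2 : ℝ) ^ θ * (t - s) ^ θ)
            + (1 + C * h0 ^ α) * (B * ((1 / 2 : ℝ) ^ θ * (t - s) ^ θ))
            + C' * (t - s) ^ θ * (B * h0 ^ θ) := by
            gcongr
            · exact i2.trans (by gcongr)
            · exact i1.trans (by gcongr)
            · exact i3.trans (by gcongr)
        _ = κ * B * (t - s) ^ θ := by rw [hκ]; ring
        _ = _ := by rw [hB, pow_succ]; ring
  intro t h1 h2 h3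
  have hlim : Tendsto (fun n : ℕ => κ ^ n * (2 * K) * (t - a) ^ θ) atTop (𝓝 0) := by
    have := (tendsto_pow_atTop_nhds_zero_of_lt_one hκ0 hs).mul_const (2 * K)
    have := this.mul_const ((t - a) ^ θ)
    simpa using this
  have : ‖Z t - Y t‖ ≤ 0 := by
    rw [hJ t]
    exact ge_of_tendsto' hlim (fun n => key n a t le_rfl h1 h2 h3)
  exact sub_eq_zero.1 (norm_le_zero_iff.1 this)

theorem unique (H : AlmostFlow T α θ C g) {Y Z : ℝ → E} {K : ℝ} (hK : 0 ≤ K)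
    (hY : ∀ s t, 0 ≤ s → s ≤ t → t ≤ T → ‖err g Y s t‖ ≤ K * (t - s) ^ θ)
    (hZ : ∀ s t, 0 ≤ s → s ≤ t → t ≤ T → ‖err g Z s t‖ ≤ K * (t - s) ^ θ)
    (h00 : Z 0 = Y 0) : ∀ t, 0 ≤ t → t ≤ T → Z t = Y t := by
  obtain ⟨h0, hh0, hl⟩ := H.unique_local hK hY hZ
  have key : ∀ n : ℕ, ∀ t, 0 ≤ t → t ≤ T → t ≤ n * h0 → Z t = Y t := by
    intro n
    induction n with
    | zero =>
      intro t h1 _ h3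
      have : t = 0 := by
        simp at h3; linarith
      rw [this, h00]
    | succ n ih =>
      intro t h1 h2 h3
      rcases le_or_gt t (n * h0) with h | h
      · exact ih t h1 h2 h
      · have hp : 0 ≤ n * h0 := by positivity
        push_cast at h3
        exact hl (n * h0) hp (ih _ hp (by linarith) le_rfl) t h.le h2 (by linarith)
  intro t h1 h2
  obtain ⟨n, hn⟩ := exists_nat_gt (t / h0)
  rw [div_lt_iff₀ hh0] at hn
  exact key n t h1 h2 hn.le

end AlmostFlow

/-- bounded, Lipschitz, with bounded second differences -/
structure Nice {E A : Type*} [NormedAddCommGroup E] [NormedAddCommGroup A] (F : E → A) (C : ℝ) :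
    Prop where
  nn : 0 ≤ C
  bd : ∀ x, ‖F x‖ ≤ C
  lip : ∀ x y, ‖F x - F y‖ ≤ C * ‖x - y‖
  dd : ∀ p q i, ‖F (p + i) - F p - (F (q + i) - F q)‖ ≤ C * ‖i‖ * ‖p - q‖

section Calc
variable {E A B D : Type*} [NormedAddCommGroup E] [NormedSpace ℝ E] [NormedAddCommGroup A]
  [NormedSpace ℝ A] [NormedAddCommGroup B] [NormedSpace ℝ B] [NormedAddCommGroup D]
  [NormedSpace ℝ D]

lemma Nice.mono {F : E → A} {C C' : ℝ} (h : Nice F C) (hC : C ≤ C') : Nice F C' where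
  nn := h.nn.trans hC
  bd x := (h.bd x).trans hC
  lip x y := (h.lip x y).trans (by gcongr)
  dd p q i := (h.dd p q i).trans (by gcongr)

lemma lip_of_deriv {F : E → A} {C : ℝ} (hd : Differentiable ℝ F)
    (hb : ∀ x, ‖fderiv ℝ F x‖ ≤ C) (x y : E) : ‖F x - F y‖ ≤ C * ‖x - y‖ :=
  convex_univ.norm_image_sub_le_of_norm_fderiv_le (fun z _ => hd z) (fun z _ => hb z)
    (Set.mem_univ y) (Set.mem_univ x)

lemma nice_of_deriv {F : E → A} {C : ℝ} (hC : 0 ≤ C) (hd : Differentiable ℝ F)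
    (h0 : ∀ x, ‖F x‖ ≤ C) (h1 : ∀ x, ‖fderiv ℝ F x‖ ≤ C)
    (h2 : ∀ x y, ‖fderiv ℝ F x - fderiv ℝ F y‖ ≤ C * ‖x - y‖) : Nice F C where
  nn := hC
  bd := h0
  lip := lip_of_deriv hd h1
  dd p q i := by
    have hder : ∀ x, HasFDerivAt (fun x => F (x + i) - F x)
        (fderiv ℝ F (x + i) - fderiv ℝ F x) x := by
      intro x
      have := (hd (x + i)).hasFDerivAt.comp x ((hasFDerivAt_id x).add_const i)
      exact this.sub (hd x).hasFDerivAt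
    refine convex_univ.norm_image_sub_le_of_norm_hasFDerivWithin_le
      (f := fun x => F (x + i) - F x) (fun z _ => (hder z).hasFDerivWithinAt) (fun z _ => ?_)
      (Set.mem_univ q) (Set.mem_univ p)
    have := h2 (z + i) z
    rwa [add_sub_cancel_left] at this

lemma taylor2 {F : E → A} {C : ℝ} (hd : Differentiable ℝ F)
    (h2 : ∀ x y, ‖fderiv ℝ F x - fderiv ℝ F y‖ ≤ C * ‖x - y‖) (hC : 0 ≤ C) (y v w : E) :
    ‖F (y + v) - F (y + w) - fderiv ℝ F y (v - w)‖ ≤ C * (‖v‖ + ‖w‖) * ‖v - w‖ := by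
  have := (convex_closedBall y (‖v‖ + ‖w‖)).norm_image_sub_le_of_norm_hasFDerivWithin_le'
    (f := F) (f' := fderiv ℝ F) (φ := fderiv ℝ F y) (C := C * (‖v‖ + ‖w‖))
    (x := y + w) (y := y + v)
    (fun z _ => (hd z).hasFDerivAt.hasFDerivWithinAt)
    (fun z hz => (h2 z y).trans (by
      rw [mem_closedBall_iff_norm] at hz
      gcongr)) (by simp) (by simp)
  simpa using this

lemma taylor3 {F : E → A} {C : ℝ} (hd : Differentiable ℝ F) (hd' : Differentiable ℝ (fderiv ℝ F))
    (h3 : ∀ x y, ‖fderiv ℝ (fderiv ℝ F) x - fderiv ℝ (fderiv ℝ F) y‖ ≤ C * ‖x - y‖) (hC : 0 ≤ C)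
    (x y v : E) :
    ‖F (x + v) - F x - fderiv ℝ F x v - (F (y + v) - F y - fderiv ℝ F y v)‖
      ≤ C * ‖v‖ ^ 2 * ‖x - y‖ := by
  have hder : ∀ x, HasFDerivAt (fun x => F (x + v) - F x - fderiv ℝ F x v)
      (fderiv ℝ F (x + v) - fderiv ℝ F x - (fderiv ℝ (fderiv ℝ F) x).flip v) x := by
    intro x
    have h1 := (hd (x + v)).hasFDerivAt.comp x ((hasFDerivAt_id x).add_const v)
    have h4 := ((hd' x).hasFDerivAt.clm_apply (hasFDerivAt_const v x))
    refine (h1.sub (hd x).hasFDerivAt).sub ?_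
    convert h4 using 1
    simp
  refine convex_univ.norm_image_sub_le_of_norm_hasFDerivWithin_le
    (f := fun x => F (x + v) - F x - fderiv ℝ F x v)
    (fun z _ => (hder z).hasFDerivWithinAt) (fun z _ => ?_)
    (Set.mem_univ y) (Set.mem_univ x)
  have hsym : (fderiv ℝ (fderiv ℝ F) z).flip v = fderiv ℝ (fderiv ℝ F) z v := by
    ext w
    rw [ContinuousLinearMap.flip_apply]
    exact second_derivative_symmetric (f := F) (f' := fderiv ℝ F)
      (fun y => (hd y).hasFDerivAt) (hd' z).hasFDerivAt w v
  have := taylor2 hd' h3 hC z v 0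
  rw [hsym]
  simp only [add_zero, norm_zero, sub_zero] at this
  linarith

lemma Nice.bilin {F : E → A} {G : E → B} {C₁ C₂ : ℝ} (hF : Nice F C₁) (hG : Nice G C₂)
    (L : A →L[ℝ] B →L[ℝ] D) : ∃ C, Nice (fun x => L (F x) (G x)) C := by
  have n1 := hF.nn
  have n2 := hG.nn
  have bb : ∀ a b, ∀ r s : ℝ, ‖a‖ ≤ r → ‖b‖ ≤ s → ‖L a b‖ ≤ ‖L‖ * r * s := by
    intro a b r s hr hs
    have : 0 ≤ r := (norm_nonneg a).trans hr
    exact (L.le_opNorm₂ a b).trans (by gcongr)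
  have c : 0 ≤ ‖L‖ * C₁ * C₂ := by positivity
  refine ⟨4 * (‖L‖ * C₁ * C₂), by positivity, fun x => ?_, fun x y => ?_, fun p q i => ?_⟩
  · have := bb _ _ _ _ (hF.bd x) (hG.bd x)
    linarith
  · have e : L (F x) (G x) - L (F y) (G y) = L (F x - F y) (G x) + L (F y) (G x - G y) := by
      simp
    have k1 := bb _ _ _ _ (hF.lip x y) (hG.bd x)
    have k2 := bb _ _ _ _ (hF.bd y) (hG.lip x y)
    simp only [e]
    refine (norm_add_le _ _).trans ?_
    have : 0 ≤ ‖L‖ * C₁ * C₂ * ‖x - y‖ := by positivity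
    nlinarith
  · have e : L (F (p + i)) (G (p + i)) - L (F p) (G p) - (L (F (q + i)) (G (q + i)) - L (F q) (G q))
        = L (F (p + i) - F p - (F (q + i) - F q)) (G (p + i))
          + L (F (q + i) - F q) (G (p + i) - G (q + i))
          + L (F p - F q) (G (p + i) - G p)
          + L (F q) (G (p + i) - G p - (G (q + i) - G q)) := by
      simp only [map_sub, sub_apply]
      abel
    have k1 := bb _ _ _ _ (hF.dd p q i) (hG.bd (p + i))
    have k2 := bb _ _ _ _ (hF.lip (q + i) q) (hG.lip (p + i) (q + i))
    have k3 := bb _ _ _ _ (hF.lip p q) (hG.lip (p + i) p)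
    have k4 := bb _ _ _ _ (hF.bd q) (hG.dd p q i)
    simp only [add_sub_cancel_left, add_sub_add_right_eq_sub] at k2 k3
    simp only [e]
    refine (norm_add_le _ _).trans ?_
    refine (add_le_add_left ((norm_add_le _ _).trans
      (add_le_add_left (norm_add_le _ _) _)) _).trans ?_
    nlinarith

lemma Nice.clm {F : E → A} {C : ℝ} (hF : Nice F C) (L : A →L[ℝ] D) :
    ∃ C, Nice (fun x => L (F x)) C := by
  have n1 := hF.nn
  refine ⟨‖L‖ * C, by positivity, fun x => ?_, fun x y => ?_, fun p q i => ?_⟩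
  · exact (L.le_opNorm _).trans (by gcongr; exact hF.bd x)
  · rw [← map_sub, mul_assoc]
    exact (L.le_opNorm _).trans (by gcongr; exact hF.lip x y)
  · rw [← map_sub, ← map_sub, ← map_sub]
    refine (L.le_opNorm _).trans ?_
    have := mul_le_mul_of_nonneg_left (hF.dd p q i) (norm_nonneg L)
    linarith

end Calc

section RDE
variable {E V W : Type*} [NormedAddCommGroup E] [NormedSpace ℝ E] [NormedAddCommGroup V]
  [NormedSpace ℝ V] [NormedAddCommGroup W] [NormedSpace ℝ W]

structure RData (T α N : ℝ) (f : E → V →L[ℝ] E) (f' : E → E →L[ℝ] V →L[ℝ] E) (G : E → W →L[ℝ] E)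
    (X : ℝ → V) (XX : ℝ → ℝ → W) : Prop where
  hT : 0 < T
  hα : 1 / 3 < α
  hN : 0 ≤ N
  nf : Nice f N
  nf' : Nice f' N
  nG : Nice G N
  nK : Nice (fun x => (f' x).comp (G x)) N
  r1 : ∀ x y v, ‖f (x + v) - f x - f' x v - (f (y + v) - f y - f' y v)‖ ≤ N * ‖v‖ ^ 2 * ‖x - y‖
  r2 : ∀ y v w, ‖f (y + v) - f (y + w) - f' y (v - w)‖ ≤ N * (‖v‖ + ‖w‖) * ‖v - w‖
  hX : ∀ s t, 0 ≤ s → s ≤ t → t ≤ T → ‖X t - X s‖ ≤ N * (t - s) ^ α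
  hXX : ∀ s t, 0 ≤ s → s ≤ t → t ≤ T → ‖XX s t‖ ≤ N * ((t - s) ^ α) ^ 2
  chen : ∀ s u t, 0 ≤ s → s ≤ u → u ≤ t → t ≤ T → ∀ x,
    G x (XX s t) = G x (XX s u) + G x (XX u t) + f' x (f x (X u - X s)) (X t - X u)

variable {T α N : ℝ} {f : E → V →L[ℝ] E} {f' : E → E →L[ℝ] V →L[ℝ] E} {G : E → W →L[ℝ] E}
    {X : ℝ → V} {XX : ℝ → ℝ → W}

/-- the increment of the Davie scheme -/
def dav (f : E → V →L[ℝ] E) (G : E → W →L[ℝ] E) (X : ℝ → V) (XX : ℝ → ℝ → W) (s t : ℝ) (x : E) :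
    E := f x (X t - X s) + G x (XX s t)

lemma clm_bd {A B : Type*} [NormedAddCommGroup A] [NormedSpace ℝ A] [NormedAddCommGroup B]
    [NormedSpace ℝ B] (L : A →L[ℝ] B) (a : A) {r s : ℝ} (hr : ‖L‖ ≤ r) (hs : ‖a‖ ≤ s) :
    ‖L a‖ ≤ r * s := L.le_of_opNorm_le_of_le hr hs

lemma rpow_three (α h : ℝ) (hh : 0 ≤ h) : h ^ (3 * α) = (h ^ α) ^ 3 := by
  rw [mul_comm, Real.rpow_mul hh]; norm_cast

lemma rpow_two' (α h : ℝ) (hh : 0 ≤ h) : h ^ (2 * α) = (h ^ α) ^ 2 := by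
  rw [mul_comm, Real.rpow_mul hh]; norm_cast

namespace RData

lemma dav_bd (H : RData T α N f f' G X XX) (s t : ℝ) (x : E) (h0 : 0 ≤ s) (h1 : s ≤ t)
    (h2 : t ≤ T) : ‖dav f G X XX s t x‖ ≤ N ^ 2 * (1 + T ^ α) * (t - s) ^ α := by
  have hN := H.hN
  have hα := H.hα
  have a0 : 0 ≤ (t - s) ^ α := Real.rpow_nonneg (by linarith) _
  have aT : (t - s) ^ α ≤ T ^ α := Real.rpow_le_rpow (by linarith) (by linarith) (by linarith)
  have k1 := clm_bd (f x) _ (H.nf.bd x) (H.hX s t h0 h1 h2)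
  have k2 := clm_bd (G x) _ (H.nG.bd x) (H.hXX s t h0 h1 h2)
  have k3 : (t - s) ^ α * (t - s) ^ α ≤ T ^ α * (t - s) ^ α := by gcongr
  refine (norm_add_le _ _).trans ?_
  nlinarith [mul_le_mul_of_nonneg_left k3 (sq_nonneg N)]

lemma dav_lip (H : RData T α N f f' G X XX) (s t : ℝ) (x y : E) (h0 : 0 ≤ s) (h1 : s ≤ t)
    (h2 : t ≤ T) : ‖dav f G X XX s t x - dav f G X XX s t y‖
      ≤ N ^ 2 * (1 + T ^ α) * (t - s) ^ α * ‖x - y‖ := by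
  have hN := H.hN
  have hα := H.hα
  have a0 : 0 ≤ (t - s) ^ α := Real.rpow_nonneg (by linarith) _
  have aT : (t - s) ^ α ≤ T ^ α := Real.rpow_le_rpow (by linarith) (by linarith) (by linarith)
  have k1 := clm_bd (f x - f y) _ (H.nf.lip x y) (H.hX s t h0 h1 h2)
  have k2 := clm_bd (G x - G y) _ (H.nG.lip x y) (H.hXX s t h0 h1 h2)
  have k3 : (t - s) ^ α * (t - s) ^ α ≤ T ^ α * (t - s) ^ α := by gcongr
  have e : dav f G X XX s t x - dav f G X XX s t y
      = (f x - f y) (X t - X s) + (G x - G y) (XX s t) := by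
    simp only [dav, sub_apply]; abel
  rw [e]
  refine (norm_add_le _ _).trans ?_
  have : 0 ≤ N ^ 2 * ‖x - y‖ := by positivity
  nlinarith [mul_le_mul_of_nonneg_left k3 this]

lemma dav_dd (H : RData T α N f f' G X XX) (s t : ℝ) (p q i : E) (h0 : 0 ≤ s) (h1 : s ≤ t)
    (h2 : t ≤ T) : ‖dav f G X XX s t (p + i) - dav f G X XX s t p
      - (dav f G X XX s t (q + i) - dav f G X XX s t q)‖
      ≤ N ^ 2 * (1 + T ^ α) * T ^ α * ‖i‖ * ‖p - q‖ := by
  have hN := H.hN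
  have hα := H.hα
  have a0 : 0 ≤ (t - s) ^ α := Real.rpow_nonneg (by linarith) _
  have aT : (t - s) ^ α ≤ T ^ α := Real.rpow_le_rpow (by linarith) (by linarith) (by linarith)
  have x1 : ‖X t - X s‖ ≤ N * T ^ α := (H.hX s t h0 h1 h2).trans (by gcongr)
  have x2 : ‖XX s t‖ ≤ N * (T ^ α) ^ 2 := (H.hXX s t h0 h1 h2).trans (by gcongr)
  have k1 := clm_bd (f (p + i) - f p - (f (q + i) - f q)) _ (H.nf.dd p q i) x1
  have k2 := clm_bd (G (p + i) - G p - (G (q + i) - G q)) _ (H.nG.dd p q i) x2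
  have e : dav f G X XX s t (p + i) - dav f G X XX s t p
      - (dav f G X XX s t (q + i) - dav f G X XX s t q)
      = (f (p + i) - f p - (f (q + i) - f q)) (X t - X s)
        + (G (p + i) - G p - (G (q + i) - G q)) (XX s t) := by
    simp only [dav, sub_apply]; abel
  rw [e]
  refine (norm_add_le _ _).trans ?_
  linarith

lemma dav_defect (H : RData T α N f f' G X XX) (s u t : ℝ) (x v : E) (h0 : 0 ≤ s) (h1 : s ≤ u)
    (h2 : u ≤ t) (h3 : t ≤ T) (hv : v = dav f G X XX s u x) :
    dav f G X XX s u x + dav f G X XX u t (x + dav f G X XX s u x) - dav f G X XX s t x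
      = (f (x + v) - f x - f' x v) (X t - X u) + ((f' x).comp (G x)) (XX s u) (X t - X u)
        + (G (x + v) - G x) (XX u t) := by
  have e1 : f' x v = f' x (f x (X u - X s)) + ((f' x).comp (G x)) (XX s u) := by
    rw [hv]; simp [dav]
  have e2 : X t - X s = (X u - X s) + (X t - X u) := by abel
  rw [← hv, e1]
  have hv' := hv
  simp only [dav] at hv' ⊢
  rw [H.chen s u t h0 h1 h2 h3 x, e2, map_add]
  simp only [sub_apply, add_apply]
  nth_rewrite 1 [hv']
  abel

lemma almostFlow (H : RData T α N f f' G X XX) :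
    ∃ C, AlmostFlow T α (3 * α) C (dav f G X XX) := by
  have hN := H.hN
  have hα := H.hα
  have hT := H.hT
  set c := N ^ 2 * (1 + T ^ α) with hc
  have hc0 : 0 ≤ c := by positivity
  have hb3 : 0 ≤ c * T ^ α := by positivity
  have hb4 : 0 ≤ N ^ 2 * c ^ 2 + N ^ 3 + N ^ 2 * c := by positivity
  have hb5 : 0 ≤ 3 * (N ^ 2 * c ^ 2) + N ^ 3 + 2 * (N ^ 2 * c) := by positivity
  set C := c + c * T ^ α + (N ^ 2 * c ^ 2 + N ^ 3 + N ^ 2 * c)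
    + (3 * (N ^ 2 * c ^ 2) + N ^ 3 + 2 * (N ^ 2 * c)) with hC
  have prep : ∀ s u t : ℝ, 0 ≤ s → s ≤ u → u ≤ t → t ≤ T →
      0 ≤ (t - s) ^ α ∧ (u - s) ^ α ≤ (t - s) ^ α ∧
      ‖X t - X u‖ ≤ N * (t - s) ^ α ∧ ‖XX s u‖ ≤ N * ((t - s) ^ α) ^ 2 ∧
      ‖XX u t‖ ≤ N * ((t - s) ^ α) ^ 2 := by
    intro s u t h0 h1 h2 h3
    have a0 : 0 ≤ (t - s) ^ α := Real.rpow_nonneg (by linarith) _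
    have a1 : 0 ≤ (u - s) ^ α := Real.rpow_nonneg (by linarith) _
    have a2 : 0 ≤ (t - u) ^ α := Real.rpow_nonneg (by linarith) _
    have a3 : (u - s) ^ α ≤ (t - s) ^ α := Real.rpow_le_rpow (by linarith) (by linarith) (by linarith)
    have a4 : (t - u) ^ α ≤ (t - s) ^ α := Real.rpow_le_rpow (by linarith) (by linarith) (by linarith)
    refine ⟨a0, a3, (H.hX u t (by linarith) h2 h3).trans (by gcongr),
      (H.hXX s u h0 h1 (by linarith)).trans (by gcongr),
      (H.hXX u t (by linarith) h2 h3).trans (by gcongr)⟩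
  refine ⟨C, hT, by linarith, by linarith, by positivity, ?_, ?_, ?_, ?_, ?_⟩
  · intro s t x h0 h1 h2
    have a0 : 0 ≤ (t - s) ^ α := Real.rpow_nonneg (by linarith) _
    refine (H.dav_bd s t x h0 h1 h2).trans (mul_le_mul_of_nonneg_right ?_ a0)
    linarith
  · intro s t x y h0 h1 h2
    have a0 : 0 ≤ (t - s) ^ α := Real.rpow_nonneg (by linarith) _
    refine (H.dav_lip s t x y h0 h1 h2).trans ?_
    gcongr
    linarith
  · intro s t p q i h0 h1 h2
    refine (H.dav_dd s t p q i h0 h1 h2).trans ?_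
    gcongr
    linarith
  · intro s u t x h0 h1 h2 h3
    obtain ⟨a0, a1, x1, x2, x3⟩ := prep s u t h0 h1 h2 h3
    rw [H.dav_defect s u t x _ h0 h1 h2 h3 rfl, rpow_three α _ (by linarith)]
    set a := (t - s) ^ α
    have hv : ‖dav f G X XX s u x‖ ≤ c * a :=
      (H.dav_bd s u x h0 h1 (by linarith)).trans (by gcongr)
    set v := dav f G X XX s u x
    have q1 : ‖f (x + v) - f x - f' x v‖ ≤ N * (c * a) ^ 2 := by
      have := H.r2 x v 0
      simp only [add_zero, sub_zero, norm_zero] at this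
      refine this.trans ?_
      rw [mul_assoc, ← sq]
      gcongr
    have q2 : ‖G (x + v) - G x‖ ≤ N * (c * a) := by
      have := H.nG.lip (x + v) x
      rw [add_sub_cancel_left] at this
      exact this.trans (by gcongr)
    have k1 := clm_bd _ _ q1 x1
    have k2 := clm_bd _ _ (clm_bd _ _ (H.nK.bd x) x2) x1
    have k3 := clm_bd _ _ q2 x3
    refine (norm_add_le _ _).trans ((add_le_add_left (norm_add_le _ _) _).trans ?_)
    calc _ ≤ _ := add_le_add (add_le_add k1 k2) k3
      _ = (N ^ 2 * c ^ 2 + N ^ 3 + N ^ 2 * c) * a ^ 3 := by ring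
      _ ≤ C * a ^ 3 := by
        gcongr
        linarith
  · intro s u t x y h0 h1 h2 h3
    obtain ⟨a0, a1, x1, x2, x3⟩ := prep s u t h0 h1 h2 h3
    rw [H.dav_defect s u t x _ h0 h1 h2 h3 rfl, H.dav_defect s u t y _ h0 h1 h2 h3 rfl,
      rpow_three α _ (by linarith)]
    set a := (t - s) ^ α
    have hv : ‖dav f G X XX s u x‖ ≤ c * a :=
      (H.dav_bd s u x h0 h1 (by linarith)).trans (by gcongr)
    have hw : ‖dav f G X XX s u y‖ ≤ c * a :=
      (H.dav_bd s u y h0 h1 (by linarith)).trans (by gcongr)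
    have hvw : ‖dav f G X XX s u x - dav f G X XX s u y‖ ≤ c * a * ‖x - y‖ :=
      (H.dav_lip s u x y h0 h1 (by linarith)).trans (by gcongr)
    set v := dav f G X XX s u x
    set w := dav f G X XX s u y
    have q1 : ‖(f (x + v) - f x - f' x v) - (f (y + w) - f y - f' y w)‖
        ≤ 3 * (N * (c * a) ^ 2 * ‖x - y‖) := by
      have e : (f (x + v) - f x - f' x v) - (f (y + w) - f y - f' y w)
        = (f (x + v) - f x - f' x v - (f (y + v) - f y - f' y v))
          + (f (y + v) - f (y + w) - f' y (v - w)) := by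
        rw [map_sub]; abel
      have j1 : ‖f (x + v) - f x - f' x v - (f (y + v) - f y - f' y v)‖
          ≤ N * (c * a) ^ 2 * ‖x - y‖ := (H.r1 x y v).trans (by gcongr)
      have j2 : ‖f (y + v) - f (y + w) - f' y (v - w)‖
          ≤ N * (c * a + c * a) * (c * a * ‖x - y‖) := (H.r2 y v w).trans (by gcongr)
      rw [e]
      refine (norm_add_le _ _).trans ?_
      linarith
    have q2 : ‖(G (x + v) - G x) - (G (y + w) - G y)‖ ≤ 2 * (N * (c * a) * ‖x - y‖) := by
      have e : (G (x + v) - G x) - (G (y + w) - G y)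
        = (G (x + v) - G x - (G (y + v) - G y)) + (G (y + v) - G (y + w)) := by abel
      have j1 : ‖G (x + v) - G x - (G (y + v) - G y)‖ ≤ N * (c * a) * ‖x - y‖ :=
        (H.nG.dd x y v).trans (by gcongr)
      have j2 : ‖G (y + v) - G (y + w)‖ ≤ N * (c * a * ‖x - y‖) := by
        have := H.nG.lip (y + v) (y + w)
        rw [add_sub_add_left_eq_sub] at this
        exact this.trans (by gcongr)
      rw [e]
      refine (norm_add_le _ _).trans ?_
      linarith
    have k1 := clm_bd _ _ q1 x1
    have k2 := clm_bd _ _ (clm_bd _ _ (H.nK.lip x y) x2) x1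
    have k3 := clm_bd _ _ q2 x3
    have e : (f (x + v) - f x - f' x v) (X t - X u) + ((f' x).comp (G x)) (XX s u) (X t - X u)
        + (G (x + v) - G x) (XX u t) - ((f (y + w) - f y - f' y w) (X t - X u)
        + ((f' y).comp (G y)) (XX s u) (X t - X u) + (G (y + w) - G y) (XX u t))
        = ((f (x + v) - f x - f' x v) - (f (y + w) - f y - f' y w)) (X t - X u)
        + ((f' x).comp (G x) - (f' y).comp (G y)) (XX s u) (X t - X u)
        + ((G (x + v) - G x) - (G (y + w) - G y)) (XX u t) := by
      simp only [sub_apply]; abel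
    rw [e]
    refine (norm_add_le _ _).trans ((add_le_add_left (norm_add_le _ _) _).trans ?_)
    calc _ ≤ _ := add_le_add (add_le_add k1 k2) k3
      _ = (3 * (N ^ 2 * c ^ 2) + N ^ 3 + 2 * (N ^ 2 * c)) * a ^ 3 * ‖x - y‖ := by ring
      _ ≤ C * a ^ 3 * ‖x - y‖ := by
        gcongr
        linarith

end RData
end RDE

section Riemann
variable {E : Type*} [NormedAddCommGroup E]

/-- `S` is a Riemann sum of `Ξ` along a partition of `[s,t]` of mesh at most `δ`. -/
def RS (Ξ : ℝ → ℝ → E) (δ s t : ℝ) (S : E) : Prop :=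
  ∃ (k : ℕ) (τ : ℕ → ℝ), τ 0 = s ∧ τ k = t ∧ (∀ i < k, τ i < τ (i + 1)) ∧
    (∀ i < k, τ (i + 1) - τ i ≤ δ) ∧ ∑ i ∈ Finset.range k, Ξ (τ i) (τ (i + 1)) = S

lemma RS.nil (Ξ : ℝ → ℝ → E) (δ s : ℝ) : RS Ξ δ s s 0 :=
  ⟨0, fun _ => s, rfl, rfl, by simp, by simp, by simp⟩

lemma RS.single (Ξ : ℝ → ℝ → E) {δ s t : ℝ} (h : s < t) (h' : t - s ≤ δ) :
    RS Ξ δ s t (Ξ s t) :=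
  ⟨1, fun i => if i = 0 then s else t, by simp, by simp, by simpa using h, by simpa using h',
    by simp⟩

lemma RS.trans {Ξ : ℝ → ℝ → E} {δ s u t : ℝ} {S S' : E} (h : RS Ξ δ s u S)
    (h' : RS Ξ δ u t S') : RS Ξ δ s t (S + S') := by
  obtain ⟨k, τ, a1, a2, a3, a4, a5⟩ := h
  obtain ⟨m, σ, b1, b2, b3, b4, b5⟩ := h'
  let ρ : ℕ → ℝ := fun i => if i < k then τ i else σ (i - k)
  have e1 : ∀ i, i ≤ k → ρ i = τ i := by
    intro i hi
    rcases hi.lt_or_eq with h | h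
    · simp [ρ, h]
    · simp [ρ, h, a2, b1]
  have e2 : ∀ i, ρ (k + i) = σ i := by
    intro i
    simp [ρ]
  refine ⟨k + m, ρ, by rw [e1 0 (Nat.zero_le _), a1], by rw [e2, b2], ?_, ?_, ?_⟩
  · intro i hi
    rcases lt_or_ge i k with h | h
    · rw [e1 i h.le, e1 (i + 1) h]; exact a3 i h
    · obtain ⟨j, rfl⟩ := Nat.exists_eq_add_of_le h
      rw [add_assoc, e2, e2]; exact b3 j (by omega)
  · intro i hi
    rcases lt_or_ge i k with h | h
    · rw [e1 i h.le, e1 (i + 1) h]; exact a4 i h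
    · obtain ⟨j, rfl⟩ := Nat.exists_eq_add_of_le h
      rw [add_assoc, e2, e2]; exact b4 j (by omega)
  · rw [Finset.sum_range_add, ← a5, ← b5]
    congr 1
    · refine Finset.sum_congr rfl fun i hi => ?_
      have := Finset.mem_range.1 hi
      rw [e1 i this.le, e1 (i + 1) this]
    · refine Finset.sum_congr rfl fun i _ => ?_
      rw [add_assoc, e2, e2]

lemma sewing {Ξ : ℝ → ℝ → E} {T θ C : ℝ} (hC : 0 ≤ C) (hθ : 1 < θ)
    (hΞ : ∀ s u t, 0 ≤ s → s ≤ u → u ≤ t → t ≤ T →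
      ‖Ξ s t - Ξ s u - Ξ u t‖ ≤ C * (t - s) ^ θ) :
    ∃ K : ℝ, 0 ≤ K ∧ ∀ δ, 0 < δ → ∀ s t, 0 ≤ s → s < t → t ≤ T →
      ∃ S, RS Ξ δ s t S ∧ ‖S - Ξ s t‖ ≤ K * (t - s) ^ θ := by
  set κ := 2 * (1 / 2 : ℝ) ^ θ with hκ
  have hκ1 : κ < 1 := by
    have : (1 / 2 : ℝ) ^ θ < (1 / 2 : ℝ) ^ (1 : ℝ) :=
      Real.rpow_lt_rpow_of_exponent_gt (by norm_num) (by norm_num) hθ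
    rw [Real.rpow_one] at this
    linarith
  set K := C / (1 - κ) with hK
  have hK0 : 0 ≤ K := div_nonneg hC (by linarith)
  have hKe : κ * K + C = K := by
    have : (1 - κ) * K = C := by rw [hK]; field_simp [show (1 - κ) ≠ 0 by linarith]
    linarith
  refine ⟨K, hK0, fun δ hδ => ?_⟩
  have key : ∀ n : ℕ, ∀ s t, 0 ≤ s → s < t → t ≤ T → t - s ≤ 2 ^ n * δ →
      ∃ S, RS Ξ δ s t S ∧ ‖S - Ξ s t‖ ≤ K * (t - s) ^ θ := by
    intro n
    induction n with
    | zero =>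
      intro s t h0 h1 h2 h3
      refine ⟨_, RS.single Ξ h1 (by simpa using h3), ?_⟩
      rw [sub_self, norm_zero]
      exact mul_nonneg hK0 (Real.rpow_nonneg (by linarith) _)
    | succ n ih =>
      intro s t h0 h1 h2 h3
      rw [pow_succ] at h3
      obtain ⟨S1, r1, k1⟩ := ih s ((s + t) / 2) h0 (by linarith) (by linarith) (by linarith)
      obtain ⟨S2, r2, k2⟩ := ih ((s + t) / 2) t (by linarith) (by linarith) h2 (by linarith)
      refine ⟨S1 + S2, r1.trans r2, ?_⟩
      have j1 := AlmostFlow.half_rpow (x := (s + t) / 2 - s) (h := t - s) (θ := θ) (by linarith)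
        (by linarith) (by linarith) (by linarith)
      have j2 := AlmostFlow.half_rpow (x := t - (s + t) / 2) (h := t - s) (θ := θ) (by linarith)
        (by linarith) (by linarith) (by linarith)
      have k3 := hΞ s ((s + t) / 2) t h0 (by linarith) (by linarith) h2
      have e : S1 + S2 - Ξ s t = (S1 - Ξ s ((s + t) / 2)) + (S2 - Ξ ((s + t) / 2) t)
          - (Ξ s t - Ξ s ((s + t) / 2) - Ξ ((s + t) / 2) t) := by abel
      have m1 := mul_le_mul_of_nonneg_left j1 hK0
      have m2 := mul_le_mul_of_nonneg_left j2 hK0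
      rw [e]
      refine (norm_sub_le _ _).trans ((add_le_add_left (norm_add_le _ _) _).trans ?_)
      calc _ ≤ K * ((1 / 2 : ℝ) ^ θ * (t - s) ^ θ) + K * ((1 / 2 : ℝ) ^ θ * (t - s) ^ θ)
            + C * (t - s) ^ θ := by linarith
        _ = (κ * K + C) * (t - s) ^ θ := by rw [hκ]; ring
        _ = _ := by rw [hKe]
  intro s t h0 h1 h2
  obtain ⟨n, hn⟩ := pow_unbounded_of_one_lt (T / δ) (one_lt_two)
  rw [div_lt_iff₀ hδ] at hn
  exact key n s t h0 h1 h2 (by linarith)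

/-- convergence of Riemann sums -/
def ConvRS (Ξ : ℝ → ℝ → E) (T : ℝ) (ξ : E) (Z : ℝ → E) : Prop :=
  ∀ t ∈ Set.Icc (0 : ℝ) T, ∀ ε : ℝ, 0 < ε → ∃ δ : ℝ, 0 < δ ∧
    ∀ S, RS Ξ δ 0 t S → ‖S - (Z t - ξ)‖ ≤ ε

lemma RS.mono {Ξ : ℝ → ℝ → E} {δ δ' s t : ℝ} {S : E} (h : RS Ξ δ s t S) (hd : δ ≤ δ') :
    RS Ξ δ' s t S := by
  obtain ⟨k, τ, a1, a2, a3, a4, a5⟩ := h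
  exact ⟨k, τ, a1, a2, a3, fun i hi => (a4 i hi).trans hd, a5⟩

lemma conv_init {Ξ : ℝ → ℝ → E} {T : ℝ} {ξ : E} {Z : ℝ → E} (hT : 0 < T)
    (h : ConvRS Ξ T ξ Z) : Z 0 = ξ := by
  have : ‖Z 0 - ξ‖ ≤ 0 := by
    refine le_of_forall_pos_le_add fun ε hε => ?_
    obtain ⟨δ, -, hδ⟩ := h 0 ⟨le_rfl, hT.le⟩ ε hε
    have := hδ 0 (RS.nil Ξ δ 0)
    rw [zero_sub, norm_neg] at this
    linarith
  exact sub_eq_zero.1 (norm_le_zero_iff.1 this)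

lemma conv_davie {Ξ : ℝ → ℝ → E} {T θ C : ℝ} {ξ : E} {Z : ℝ → E} (hC : 0 ≤ C) (hθ : 1 < θ)
    (hΞ : ∀ s u t, 0 ≤ s → s ≤ u → u ≤ t → t ≤ T →
      ‖Ξ s t - Ξ s u - Ξ u t‖ ≤ C * (t - s) ^ θ) (hconv : ConvRS Ξ T ξ Z) :
    ∃ K : ℝ, 0 ≤ K ∧ ∀ s t, 0 ≤ s → s < t → t ≤ T →
      ‖Z t - Z s - Ξ s t‖ ≤ K * (t - s) ^ θ := by
  obtain ⟨K, hK0, hK⟩ := sewing hC hθ hΞ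
  refine ⟨K, hK0, fun s t h0 h1 h2 => ?_⟩
  refine le_of_forall_pos_le_add fun ε hε => ?_
  obtain ⟨δ1, hδ1, c1⟩ := hconv s ⟨h0, by linarith⟩ (ε / 2) (by linarith)
  obtain ⟨δ2, hδ2, c2⟩ := hconv t ⟨by linarith, h2⟩ (ε / 2) (by linarith)
  have hδ : 0 < min δ1 δ2 := lt_min hδ1 hδ2
  have : ∃ S1, RS Ξ (min δ1 δ2) 0 s S1 := by
    rcases h0.eq_or_lt with h | h
    · rw [← h]; exact ⟨0, RS.nil _ _ _⟩
    · obtain ⟨S, hS, -⟩ := hK _ hδ 0 s le_rfl h (by linarith)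
      exact ⟨S, hS⟩
  obtain ⟨S1, hS1⟩ := this
  obtain ⟨S2, hS2, k⟩ := hK _ hδ s t h0 h1 h2
  have e1 := c1 S1 (hS1.mono (min_le_left _ _))
  have e2 := c2 (S1 + S2) ((hS1.trans hS2).mono (min_le_right _ _))
  have e : Z t - Z s - Ξ s t = (S2 - Ξ s t) + (S1 - (Z s - ξ)) - (S1 + S2 - (Z t - ξ)) := by abel
  rw [e]
  refine (norm_sub_le _ _).trans ((add_le_add_left (norm_add_le _ _) _).trans ?_)
  linarith

lemma davie_conv {Ξ : ℝ → ℝ → E} {T θ K : ℝ} {Y : ℝ → E} (hK : 0 ≤ K) (hθ : 1 < θ)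
    (hY : ∀ s t, 0 ≤ s → s ≤ t → t ≤ T → ‖Y t - Y s - Ξ s t‖ ≤ K * (t - s) ^ θ) :
    ConvRS Ξ T (Y 0) Y := by
  intro t ht ε hε
  have c : ContinuousAt (fun h : ℝ => K * h ^ (θ - 1) * T) 0 := by
    have : ContinuousAt (fun h : ℝ => h ^ (θ - 1)) 0 :=
      Real.continuousAt_rpow_const _ _ (Or.inr (by linarith))
    fun_prop
  have v : K * (0:ℝ) ^ (θ - 1) * T < ε := by
    rw [Real.zero_rpow (by linarith)]; simpa using hε
  have e5 : ∀ᶠ h in 𝓝[>] (0:ℝ), 0 < h := eventually_mem_nhdsWithin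
  obtain ⟨δ, h1, hδ⟩ := (((c.eventually (gt_mem_nhds v)).filter_mono
    nhdsWithin_le_nhds).and e5).exists
  refine ⟨δ, hδ, ?_⟩
  rintro S ⟨k, τ, a1, a2, a3, a4, rfl⟩
  have mono : ∀ j, j ≤ k → ∀ i, i ≤ j → τ i ≤ τ j := by
    intro j
    induction j with
    | zero => intro _ i hi; rw [Nat.le_zero.1 hi]
    | succ j ih =>
      intro hj i hi
      rcases Nat.le_succ_iff.1 hi with h | h
      · exact (ih (by omega) i h).trans (a3 j (by omega)).le
      · rw [h]
  have tel : ∑ i ∈ Finset.range k, (Y (τ (i + 1)) - Y (τ i)) = Y t - Y 0 := by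
    rw [Finset.sum_range_sub (fun i => Y (τ i)), a1, a2]
  have tel2 : ∑ i ∈ Finset.range k, (τ (i + 1) - τ i) = t := by
    rw [Finset.sum_range_sub τ, a1, a2, sub_zero]
  rw [norm_sub_rev, ← tel, ← Finset.sum_sub_distrib]
  calc _ ≤ ∑ i ∈ Finset.range k, ‖Y (τ (i + 1)) - Y (τ i) - Ξ (τ i) (τ (i + 1))‖ :=
        norm_sum_le _ _
    _ ≤ ∑ i ∈ Finset.range k, K * δ ^ (θ - 1) * (τ (i + 1) - τ i) := by
        refine Finset.sum_le_sum fun i hi => ?_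
        have hi := Finset.mem_range.1 hi
        have m0 : 0 ≤ τ i := by rw [← a1]; exact mono i hi.le 0 (Nat.zero_le _)
        have m1 : τ (i + 1) ≤ T := by
          have := mono k le_rfl (i + 1) hi
          rw [a2] at this
          exact this.trans ht.2
        have hp := a3 i hi
        refine (hY _ _ m0 hp.le m1).trans ?_
        have e : (τ (i + 1) - τ i) ^ θ = (τ (i + 1) - τ i) ^ (θ - 1) * (τ (i + 1) - τ i) := by
          rw [← Real.rpow_add_one (by linarith)]; congr 1; ring
        rw [e, ← mul_assoc]
        have : (τ (i + 1) - τ i) ^ (θ - 1) ≤ δ ^ (θ - 1) :=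
          Real.rpow_le_rpow (by linarith) (a4 i hi) (by linarith)
        have : 0 ≤ τ (i + 1) - τ i := by linarith
        gcongr
    _ = K * δ ^ (θ - 1) * t := by rw [← Finset.mul_sum, tel2]
    _ ≤ K * δ ^ (θ - 1) * T := by
        have := Real.rpow_nonneg hδ.le (θ - 1)
        have := ht.2
        gcongr
    _ ≤ ε := h1.le

end Riemann

section Sol
variable {E V W : Type*} [NormedAddCommGroup E] [NormedSpace ℝ E] [NormedAddCommGroup V]
  [NormedSpace ℝ V] [NormedAddCommGroup W] [NormedSpace ℝ W]
  {T α N : ℝ} {f : E → V →L[ℝ] E} {f' : E → E →L[ℝ] V →L[ℝ] E} {G : E → W →L[ℝ] E}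
    {X : ℝ → V} {XX : ℝ → ℝ → W}

namespace RData

lemma germ (H : RData T α N f f' G X XX) {Z : ℝ → E} {R : ℝ} (hR : 0 ≤ R)
    (hZ : ∀ s t, 0 ≤ s → s ≤ t → t ≤ T →
      ‖Z t - Z s - f (Z s) (X t - X s)‖ ≤ R * ((t - s) ^ α) ^ 2) :
    ∃ C, 0 ≤ C ∧ ∀ s u t, 0 ≤ s → s ≤ u → u ≤ t → t ≤ T →
      ‖dav f G X XX s t (Z s) - dav f G X XX s u (Z s) - dav f G X XX u t (Z u)‖
        ≤ C * (t - s) ^ (3 * α) := by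
  have hN := H.hN
  have hα := H.hα
  have hT := H.hT
  set c := N ^ 2 + R * T ^ α with hc
  have hc0 : 0 ≤ c := by positivity
  refine ⟨N ^ 2 * c ^ 2 + N ^ 2 * R + N ^ 2 * c, by positivity, ?_⟩
  intro s u t h0 h1 h2 h3
  rw [rpow_three α _ (by linarith)]
  have a0 : 0 ≤ (t - s) ^ α := Real.rpow_nonneg (by linarith) _
  have aT : (t - s) ^ α ≤ T ^ α := Real.rpow_le_rpow (by linarith) (by linarith) (by linarith)
  have a1 : 0 ≤ (u - s) ^ α := Real.rpow_nonneg (by linarith) _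
  have a2 : 0 ≤ (t - u) ^ α := Real.rpow_nonneg (by linarith) _
  have a3 : (u - s) ^ α ≤ (t - s) ^ α := Real.rpow_le_rpow (by linarith) (by linarith) (by linarith)
  have a4 : (t - u) ^ α ≤ (t - s) ^ α := Real.rpow_le_rpow (by linarith) (by linarith) (by linarith)
  have x0 : ‖X u - X s‖ ≤ N * (t - s) ^ α := (H.hX s u h0 h1 (by linarith)).trans (by gcongr)
  have x1 : ‖X t - X u‖ ≤ N * (t - s) ^ α := (H.hX u t (by linarith) h2 h3).trans (by gcongr)
  have x3 : ‖XX u t‖ ≤ N * ((t - s) ^ α) ^ 2 := (H.hXX u t (by linarith) h2 h3).trans (by gcongr)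
  have hr : ‖Z u - Z s - f (Z s) (X u - X s)‖ ≤ R * ((t - s) ^ α) ^ 2 :=
    (hZ s u h0 h1 (by linarith)).trans (by gcongr)
  set a := (t - s) ^ α
  set r := Z u - Z s - f (Z s) (X u - X s) with hrdef
  set z := Z u - Z s with hz
  have hzu : Z u = Z s + z := by rw [hz]; abel
  have hzb : ‖z‖ ≤ c * a := by
    have e : z = f (Z s) (X u - X s) + r := by rw [hrdef]; abel
    have := clm_bd _ _ (H.nf.bd (Z s)) x0
    rw [e]
    refine (norm_add_le _ _).trans ?_
    have q : R * a ^ 2 ≤ R * T ^ α * a := by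
      rw [sq, ← mul_assoc]; gcongr
    calc _ ≤ N * (N * a) + R * T ^ α * a := by linarith
      _ = c * a := by rw [hc]; ring
  have q1 : ‖f (Z s + z) - f (Z s) - f' (Z s) z + f' (Z s) r‖
      ≤ N * (c * a) ^ 2 + N * (R * a ^ 2) := by
    have j := H.r2 (Z s) z 0
    simp only [add_zero, sub_zero, norm_zero] at j
    have j2 : ‖f (Z s + z) - f (Z s) - f' (Z s) z‖ ≤ N * (c * a) ^ 2 := by
      refine j.trans ?_
      rw [mul_assoc, ← sq]
      gcongr
    exact (norm_add_le _ _).trans (add_le_add j2 (clm_bd _ _ (H.nf'.bd _) hr))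
  have q2 : ‖G (Z s + z) - G (Z s)‖ ≤ N * (c * a) := by
    have := H.nG.lip (Z s + z) (Z s)
    rw [add_sub_cancel_left] at this
    exact this.trans (by gcongr)
  have k1 := clm_bd _ _ q1 x1
  have k2 := clm_bd _ _ q2 x3
  have e : dav f G X XX s t (Z s) - dav f G X XX s u (Z s) - dav f G X XX u t (Z u)
      = -((f (Z s + z) - f (Z s) - f' (Z s) z + f' (Z s) r) (X t - X u)
        + (G (Z s + z) - G (Z s)) (XX u t)) := by
    have e2 : X t - X s = (X u - X s) + (X t - X u) := by abel
    simp only [dav]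
    rw [H.chen s u t h0 h1 h2 h3 (Z s), e2, map_add, ← hzu, hrdef, map_sub (f' (Z s)) z]
    simp only [sub_apply, add_apply]
    abel
  rw [e, norm_neg]
  refine (norm_add_le _ _).trans ?_
  calc _ ≤ _ := add_le_add k1 k2
    _ = _ := by ring

lemma davie_holder (H : RData T α N f f' G X XX) {Y : ℝ → E} {K : ℝ} (hK : 0 ≤ K)
    (hY : ∀ s t, 0 ≤ s → s ≤ t → t ≤ T →
      ‖AlmostFlow.err (dav f G X XX) Y s t‖ ≤ K * (t - s) ^ (3 * α)) :
    ∃ M, 0 ≤ M ∧ (∀ s t, 0 ≤ s → s ≤ t → t ≤ T → ‖Y t - Y s‖ ≤ M * (t - s) ^ α) ∧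
      (∀ s t, 0 ≤ s → s ≤ t → t ≤ T →
        ‖Y t - Y s - f (Y s) (X t - X s)‖ ≤ M * ((t - s) ^ α) ^ 2) := by
  have hN := H.hN
  have hα := H.hα
  have hT := H.hT
  set A := T ^ α with hA
  have hA0 : 0 ≤ A := Real.rpow_nonneg hT.le _
  refine ⟨K * A ^ 2 + N ^ 2 * (1 + A) + (N ^ 2 + K * A), by positivity, ?_, ?_⟩
  · intro s t h0 h1 h2
    have a0 : 0 ≤ (t - s) ^ α := Real.rpow_nonneg (by linarith) _
    have aT : (t - s) ^ α ≤ A := Real.rpow_le_rpow (by linarith) (by linarith) (by linarith)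
    have k1 := hY s t h0 h1 h2
    have k2 := H.dav_bd s t (Y s) h0 h1 h2
    rw [rpow_three α _ (by linarith)] at k1
    set a := (t - s) ^ α
    have e : Y t - Y s = AlmostFlow.err (dav f G X XX) Y s t + dav f G X XX s t (Y s) := by
      simp only [AlmostFlow.err]; abel
    rw [e]
    refine (norm_add_le _ _).trans ?_
    have q : K * a ^ 3 ≤ K * A ^ 2 * a := by
      rw [pow_succ, ← mul_assoc]; gcongr
    have : 0 ≤ (N ^ 2 + K * A) * a := by positivity
    linarith
  · intro s t h0 h1 h2
    have a0 : 0 ≤ (t - s) ^ α := Real.rpow_nonneg (by linarith) _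
    have aT : (t - s) ^ α ≤ A := Real.rpow_le_rpow (by linarith) (by linarith) (by linarith)
    have k1 := hY s t h0 h1 h2
    have k2 := clm_bd _ _ (H.nG.bd (Y s)) (H.hXX s t h0 h1 h2)
    rw [rpow_three α _ (by linarith)] at k1
    set a := (t - s) ^ α
    have e : Y t - Y s - f (Y s) (X t - X s)
        = AlmostFlow.err (dav f G X XX) Y s t + G (Y s) (XX s t) := by
      simp only [AlmostFlow.err, dav]; abel
    rw [e]
    refine (norm_add_le _ _).trans ?_
    have q : K * a ^ 3 ≤ K * A * a ^ 2 := by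
      rw [pow_succ', ← mul_assoc]; gcongr
    have : 0 ≤ (K * A ^ 2 + N ^ 2 * (1 + A)) * a ^ 2 := by positivity
    linarith

end RData
end Sol

section NiceGen
variable {E A B D : Type*} [NormedAddCommGroup E] [NormedSpace ℝ E] [NormedAddCommGroup A]
  [NormedSpace ℝ A] [NormedAddCommGroup B] [NormedSpace ℝ B] [NormedAddCommGroup D]
  [NormedSpace ℝ D]

lemma nice_gen (f : E → A) (hf_smooth : ContDiff ℝ 3 f)
    (hf_bdd : ∀ i : ℕ, i ≤ 3 → ∃ C : ℝ, ∀ x, ‖iteratedFDeriv ℝ i f x‖ ≤ C) :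
    ∃ S, 0 ≤ S ∧ Nice f S ∧ Nice (fderiv ℝ f) S ∧
      (∀ x y v, ‖f (x + v) - f x - fderiv ℝ f x v - (f (y + v) - f y - fderiv ℝ f y v)‖
        ≤ S * ‖v‖ ^ 2 * ‖x - y‖) ∧
      (∀ y v w, ‖f (y + v) - f (y + w) - fderiv ℝ f y (v - w)‖
        ≤ S * (‖v‖ + ‖w‖) * ‖v - w‖) := by
  have s1 : ContDiff ℝ 2 (fderiv ℝ f) := hf_smooth.fderiv_right (by norm_num)
  have s2 : ContDiff ℝ 1 (fderiv ℝ (fderiv ℝ f)) := s1.fderiv_right (by norm_num)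
  have d0 : Differentiable ℝ f := hf_smooth.differentiable (by norm_num)
  have d1 : Differentiable ℝ (fderiv ℝ f) := s1.differentiable (by norm_num)
  have d2 : Differentiable ℝ (fderiv ℝ (fderiv ℝ f)) := s2.differentiable (by norm_num)
  obtain ⟨C0, hC0⟩ := hf_bdd 0 (by norm_num)
  obtain ⟨C1, hC1⟩ := hf_bdd 1 (by norm_num)
  obtain ⟨C2, hC2⟩ := hf_bdd 2 (by norm_num)
  obtain ⟨C3, hC3⟩ := hf_bdd 3 (by norm_num)
  simp only [norm_iteratedFDeriv_zero] at hC0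
  simp only [← norm_iteratedFDeriv_fderiv, norm_iteratedFDeriv_zero] at hC1 hC2 hC3
  have p0 : 0 ≤ C0 := (norm_nonneg _).trans (hC0 0)
  have p1 : 0 ≤ C1 := (norm_nonneg _).trans (hC1 0)
  have p2 : 0 ≤ C2 := (norm_nonneg _).trans (hC2 0)
  have p3 : 0 ≤ C3 := (norm_nonneg _).trans (hC3 0)
  have l1 := lip_of_deriv d1 hC2
  have l2 := lip_of_deriv d2 hC3
  set S := C0 + C1 + C2 + C3 with hS
  have pS : 0 ≤ S := by positivity
  have nf : Nice f S := nice_of_deriv pS d0 (fun x => (hC0 x).trans (by linarith))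
    (fun x => (hC1 x).trans (by linarith)) (fun x y => (l1 x y).trans (by gcongr; linarith))
  have nf' : Nice (fderiv ℝ f) S := nice_of_deriv pS d1 (fun x => (hC1 x).trans (by linarith))
    (fun x => (hC2 x).trans (by linarith)) (fun x y => (l2 x y).trans (by gcongr; linarith))
  refine ⟨S, pS, nf, nf', ?_, ?_⟩
  · intro x y v
    refine (taylor3 d0 d1 l2 p3 x y v).trans ?_
    gcongr
    linarith
  · intro y v w
    refine (taylor2 d0 l1 p2 y v w).trans ?_
    gcongr
    linarith

lemma Nice.compCLM {F : E → A →L[ℝ] B} {G : E → D →L[ℝ] A} {C₁ C₂ : ℝ} (hF : Nice F C₁)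
    (hG : Nice G C₂) : ∃ C, Nice (fun x => (F x).comp (G x)) C :=
  hF.bilin hG (ContinuousLinearMap.compL ℝ D A B)

end NiceGen

section GenData
variable {E V W : Type*} [NormedAddCommGroup E] [NormedSpace ℝ E] [NormedAddCommGroup V]
  [NormedSpace ℝ V] [NormedAddCommGroup W] [NormedSpace ℝ W]

lemma exists_rdata_gen (α T : ℝ) (hα1 : 1/3 < α) (hT : 0 < T)
    (f : E → (V →L[ℝ] E))
    (hf_smooth : ContDiff ℝ 3 f)
    (hf_bdd : ∀ i : ℕ, i ≤ 3 → ∃ C : ℝ, ∀ x, ‖iteratedFDeriv ℝ i f x‖ ≤ C)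
    (L : (V →L[ℝ] V →L[ℝ] E) →L[ℝ] W →L[ℝ] E)
    (X : ℝ → V) (XX : ℝ → ℝ → W) {B1 B2 : ℝ} (pB1 : 0 ≤ B1) (pB2 : 0 ≤ B2)
    (hB1 : ∀ s t, 0 ≤ s → s ≤ t → t ≤ T → ‖X t - X s‖ ≤ B1 * (t - s) ^ α)
    (hB2 : ∀ s t, 0 ≤ s → s ≤ t → t ≤ T → ‖XX s t‖ ≤ B2 * ((t - s) ^ α) ^ 2)
    (hch : ∀ s u t, 0 ≤ s → s ≤ u → u ≤ t → t ≤ T → ∀ x,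
      L ((fderiv ℝ f x).comp (f x)) (XX s t) = L ((fderiv ℝ f x).comp (f x)) (XX s u)
        + L ((fderiv ℝ f x).comp (f x)) (XX u t) + fderiv ℝ f x (f x (X u - X s)) (X t - X u)) :
    ∃ N, RData T α N f (fderiv ℝ f) (fun x => L ((fderiv ℝ f x).comp (f x))) X XX := by
  obtain ⟨S, pS, nf, nf', hr1, hr2⟩ := nice_gen f hf_smooth hf_bdd
  obtain ⟨A1, nA1⟩ := nf'.compCLM nf
  obtain ⟨A2, nA2⟩ := nA1.clm L
  obtain ⟨A3, nA3⟩ := nf'.compCLM nA2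
  have q2 := nA2.nn
  have q3 := nA3.nn
  set N := S + A2 + A3 + B1 + B2 with hN
  have pN : 0 ≤ N := by positivity
  refine ⟨N, hT, hα1, pN, nf.mono (by linarith), nf'.mono (by linarith), nA2.mono (by linarith),
    nA3.mono (by linarith), ?_, ?_, ?_, ?_, hch⟩
  · intro x y v
    refine (hr1 x y v).trans ?_
    gcongr
    linarith
  · intro y v w
    refine (hr2 y v w).trans ?_
    gcongr
    linarith
  · intro s t h0 h1 h2
    have := Real.rpow_nonneg (sub_nonneg.2 h1) α
    refine (hB1 s t h0 h1 h2).trans ?_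
    gcongr
    linarith
  · intro s t h0 h1 h2
    refine (hB2 s t h0 h1 h2).trans ?_
    gcongr
    linarith

end GenData

section Concrete
variable {d e : ℕ}

lemma contractTensor_bound (B : Euc d →L[ℝ] Euc d →L[ℝ] Euc e)
    (M : EuclideanSpace ℝ (Fin d × Fin d)) :
    ‖contractTensor B M‖ ≤ ((d : ℝ) * d) * ‖B‖ * ‖M‖ := by
  unfold contractTensor
  have h : ∀ i j : Fin d, ‖M (i, j) • B (EuclideanSpace.single i (1 : ℝ))
      (EuclideanSpace.single j (1 : ℝ))‖ ≤ ‖B‖ * ‖M‖ := by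
    intro i j
    rw [norm_smul, mul_comm]
    have h1 := B.le_opNorm₂ (EuclideanSpace.single i (1 : ℝ)) (EuclideanSpace.single j (1 : ℝ))
    simp only [EuclideanSpace.norm_single, norm_one, mul_one] at h1
    have h2 : ‖M (i, j)‖ ≤ ‖M‖ := PiLp.norm_apply_le M (i, j)
    gcongr
  calc _ ≤ ∑ i : Fin d, ∑ j : Fin d, ‖B‖ * ‖M‖ := by
        refine (norm_sum_le _ _).trans (Finset.sum_le_sum fun i _ => ?_)
        exact (norm_sum_le _ _).trans (Finset.sum_le_sum fun j _ => h i j)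
    _ = _ := by simp; ring

/-- `contractTensor` as a continuous bilinear map -/
def ctL (d e : ℕ) : (Euc d →L[ℝ] Euc d →L[ℝ] Euc e) →L[ℝ]
    EuclideanSpace ℝ (Fin d × Fin d) →L[ℝ] Euc e :=
  LinearMap.mkContinuous₂ (LinearMap.mk₂ ℝ contractTensor
    (by intro B B' M; simp [contractTensor, Finset.sum_add_distrib])
    (by intro c B M; simp [contractTensor, Finset.smul_sum, smul_comm c])
    (by intro B M M'; simp [contractTensor, Finset.sum_add_distrib, add_smul])
    (by intro c B M; simp [contractTensor, Finset.smul_sum, mul_smul]))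
    ((d : ℝ) * d) contractTensor_bound

lemma ctL_apply (B : Euc d →L[ℝ] Euc d →L[ℝ] Euc e) (M : EuclideanSpace ℝ (Fin d × Fin d)) :
    ctL d e B M = contractTensor B M := rfl

lemma euc_sum (x : Euc d) : x = ∑ i, x i • EuclideanSpace.single i (1 : ℝ) := by
  have := (EuclideanSpace.basisFun (Fin d) ℝ).sum_repr x
  simp only [EuclideanSpace.basisFun_repr, EuclideanSpace.basisFun_apply] at this
  exact this.symm

lemma contract_chen (B : Euc d →L[ℝ] Euc d →L[ℝ] Euc e)
    (M M1 M2 : EuclideanSpace ℝ (Fin d × Fin d)) (x y : Euc d)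
    (h : ∀ i j, M (i, j) - M1 (i, j) - M2 (i, j) = x i * y j) :
    contractTensor B M = contractTensor B M1 + contractTensor B M2 + B x y := by
  have hB : B x y = ∑ i, ∑ j, (x i * y j) •
      B (EuclideanSpace.single i (1 : ℝ)) (EuclideanSpace.single j (1 : ℝ)) := by
    conv_lhs => rw [euc_sum x, euc_sum y]
    simp only [map_sum, map_smul, ContinuousLinearMap.sum_apply, smul_apply,
      Finset.smul_sum, smul_smul]
    rw [Finset.sum_comm]
    refine Finset.sum_congr rfl fun i _ => Finset.sum_congr rfl fun j _ => ?_
    rw [mul_comm]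
  rw [hB]
  simp only [contractTensor, ← Finset.sum_add_distrib, ← add_smul]
  refine Finset.sum_congr rfl fun i _ => Finset.sum_congr rfl fun j _ => ?_
  rw [← h i j]
  congr 1
  ring

lemma holder_of_bdd {A : Type*} [NormedAddCommGroup A] {α T : ℝ} {X : ℝ → A}
    (h : BddAbove (holderRatios α T X)) : ∃ C, 0 ≤ C ∧ ∀ s t, 0 ≤ s → s ≤ t → t ≤ T →
      ‖X t - X s‖ ≤ C * (t - s) ^ α := by
  obtain ⟨C, hC⟩ := h
  refine ⟨max C 0, le_max_right _ _, fun s t h0 h1 h2 => ?_⟩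
  rcases h1.eq_or_lt with rfl | h1
  · rw [sub_self, norm_zero]
    exact mul_nonneg (le_max_right _ _) (Real.rpow_nonneg (by linarith) _)
  · have hp : 0 < (t - s) ^ α := Real.rpow_pos_of_pos (by linarith) _
    have := hC ⟨s, t, h0, h1, h2, rfl⟩
    rw [div_le_iff₀ hp] at this
    exact this.trans (by gcongr; exact le_max_left _ _)

lemma holder2_of_bdd {A : Type*} [NormedAddCommGroup A] {α T : ℝ} {X : ℝ → ℝ → A}
    (hd : ∀ s, 0 ≤ s → s ≤ T → X s s = 0)
    (h : BddAbove (holderRatios2 α T X)) : ∃ C, 0 ≤ C ∧ ∀ s t, 0 ≤ s → s ≤ t → t ≤ T →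
      ‖X s t‖ ≤ C * ((t - s) ^ α) ^ 2 := by
  obtain ⟨C, hC⟩ := h
  refine ⟨max C 0, le_max_right _ _, fun s t h0 h1 h2 => ?_⟩
  rcases h1.eq_or_lt with rfl | h1
  · rw [hd s h0 h2, norm_zero]
    exact mul_nonneg (le_max_right _ _) (sq_nonneg _)
  · have hp : 0 < (t - s) ^ α := Real.rpow_pos_of_pos (by linarith) _
    have := hC ⟨s, t, h0, by linarith, by linarith, h2, h1.ne, rfl⟩
    rw [abs_of_pos (by linarith), rpow_two' _ _ (by linarith), div_le_iff₀ (by positivity)] at this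
    exact this.trans (by gcongr; exact le_max_left _ _)

lemma exists_rdata (α T : ℝ) (hα1 : 1/3 < α) (hT : 0 < T)
    (f : Euc e → (Euc d →L[ℝ] Euc e))
    (hf_smooth : ContDiff ℝ 3 f)
    (hf_bdd : ∀ i : ℕ, i ≤ 3 → ∃ C : ℝ, ∀ x, ‖iteratedFDeriv ℝ i f x‖ ≤ C)
    (X : ℝ → Euc d) (XX : ℝ → ℝ → EuclideanSpace ℝ (Fin d × Fin d))
    (hChen : ∀ s u t : ℝ, 0 ≤ s → s ≤ u → u ≤ t → t ≤ T → ∀ i j : Fin d,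
      XX s t (i, j) - XX s u (i, j) - XX u t (i, j) = (X u i - X s i) * (X t j - X u j))
    (hX : BddAbove (holderRatios α T X))
    (hXX : BddAbove (holderRatios2 α T XX)) :
    ∃ N, RData T α N f (fderiv ℝ f) (fun x => ctL d e ((fderiv ℝ f x).comp (f x))) X XX := by
  have hXXd : ∀ s, 0 ≤ s → s ≤ T → XX s s = 0 := by
    intro s h0 h1
    ext ⟨i, j⟩
    have := hChen s s s h0 le_rfl le_rfl h1 i j
    simp at this
    simpa using this
  obtain ⟨B1, pB1, hB1⟩ := holder_of_bdd hX
  obtain ⟨B2, pB2, hB2⟩ := holder2_of_bdd hXXd hXX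
  refine exists_rdata_gen α T hα1 hT f hf_smooth hf_bdd (ctL d e) X XX pB1 pB2 hB1 hB2 ?_
  · intro s u t h0 h1 h2 h3 x
    simp only [ctL_apply]
    rw [contract_chen _ (XX s t) (XX s u) (XX u t) (X u - X s) (X t - X u)
      (fun i j => by simpa using hChen s u t h0 h1 h2 h3 i j)]
    rfl

end Concrete

/-- Existence and uniqueness for RDEs: for `α ∈ (1/3, 1/2]`, `T > 0`,
`ξ ∈ ℝ^e`, `f ∈ C³_b(ℝ^e, L(ℝ^d, ℝ^e))` and an `α`-Hölder rough path `𝐗 = (X, 𝕏)` on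
`[0,T]` with values in `ℝ^d`, there is a solution `Y` of `Y_t = ξ + ∫_0^t f(Y_s) d𝐗_s`,
unique on `[0,T]`. -/
theorem rde_existence_uniqueness (α T : ℝ) (hα1 : 1/3 < α) (hα2 : α ≤ 1/2) (hT : 0 < T)
    (d e : ℕ) (ξ : Euc e) (f : Euc e → (Euc d →L[ℝ] Euc e))
    (hf_smooth : ContDiff ℝ 3 f)
    (hf_bdd : ∀ i : ℕ, i ≤ 3 → ∃ C : ℝ, ∀ x, ‖iteratedFDeriv ℝ i f x‖ ≤ C)
    (X : ℝ → Euc d) (XX : ℝ → ℝ → EuclideanSpace ℝ (Fin d × Fin d))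
    (hXcont : ContinuousOn X (Set.Icc 0 T))
    (hChen : ∀ s u t : ℝ, 0 ≤ s → s ≤ u → u ≤ t → t ≤ T → ∀ i j : Fin d,
      XX s t (i, j) - XX s u (i, j) - XX u t (i, j) = (X u i - X s i) * (X t j - X u j))
    (hX : BddAbove (holderRatios α T X))
    (hXX : BddAbove (holderRatios2 α T XX)) :
    ∃ Y : ℝ → Euc e, SolvesRDE α T X XX f ξ Y ∧
      ∀ Z : ℝ → Euc e, SolvesRDE α T X XX f ξ Z → ∀ t ∈ Set.Icc (0 : ℝ) T, Z t = Y t := by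
  obtain ⟨N, H⟩ := exists_rdata α T hα1 hT f hf_smooth hf_bdd X XX hChen hX hXX
  obtain ⟨C, AF⟩ := H.almostFlow
  obtain ⟨Y, hY0, K, hK0, hK⟩ := AF.exists_solution ξ
  have hθ : 1 < 3 * α := by linarith
  have hN := H.hN
  refine ⟨Y, ⟨?_, ?_, ?_, ?_⟩, ?_⟩
  · obtain ⟨M, hM0, hM1, -⟩ := H.davie_holder hK0 hK
    intro s hs
    rw [ContinuousWithinAt, tendsto_iff_norm_sub_tendsto_zero]
    have c : ContinuousAt (fun t : ℝ => M * |t - s| ^ α) s := by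
      have c1 : ContinuousAt (fun x : ℝ => x ^ α) |s - s| :=
        Real.continuousAt_rpow_const _ _ (Or.inr (by linarith))
      have c2 : ContinuousAt (fun t : ℝ => |t - s|) s := by fun_prop
      exact (ContinuousAt.comp (f := fun t : ℝ => |t - s|) c1 c2).const_mul M
    have c' := c.tendsto
    simp only [sub_self, abs_zero, Real.zero_rpow (show α ≠ 0 by linarith), mul_zero] at c'
    refine squeeze_zero' (Eventually.of_forall fun _ => norm_nonneg _) ?_
      (c'.mono_left nhdsWithin_le_nhds)
    filter_upwards [self_mem_nhdsWithin] with t ht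
    rcases le_total s t with h | h
    · rw [abs_of_nonneg (by linarith)]
      exact hM1 s t hs.1 h ht.2
    · rw [abs_of_nonpos (by linarith), norm_sub_rev, neg_sub]
      exact hM1 t s ht.1 h hs.2
  · obtain ⟨M, hM0, hM1, -⟩ := H.davie_holder hK0 hK
    refine ⟨N * M, ?_⟩
    rintro r ⟨s, t, h0, h1, h2, rfl⟩
    have hp : 0 < (t - s) ^ α := Real.rpow_pos_of_pos (by linarith) _
    rw [div_le_iff₀ hp]
    have := hM1 s t h0 h1.le h2
    have k := H.nf.lip (Y t) (Y s)
    refine k.trans ?_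
    rw [mul_assoc]
    gcongr
  · obtain ⟨M, hM0, hM1, hM2⟩ := H.davie_holder hK0 hK
    refine ⟨M + N * M * N, ?_⟩
    rintro r ⟨s, t, h0, h0', h1, h1', hne, rfl⟩
    have hp : 0 < |t - s| := abs_pos.2 (sub_ne_zero.2 hne.symm)
    have hq : 0 < |t - s| ^ α := Real.rpow_pos_of_pos hp _
    rw [rpow_two' _ _ hp.le, div_le_iff₀ (by positivity)]
    have hnn : 0 ≤ N * M * N * (|t - s| ^ α) ^ 2 := by positivity
    rcases lt_or_gt_of_ne hne with h | h
    · have := hM2 s t h0 h.le h1'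
      rw [abs_of_pos (by linarith)] at hnn ⊢
      linarith
    · have k2 := hM2 t s h0' h.le h1
      have k1 := hM1 t s h0' h.le h1
      have kx := H.hX t s h0' h.le h1
      rw [abs_of_neg (by linarith), neg_sub] at hnn ⊢
      have kf : ‖f (Y s) - f (Y t)‖ ≤ N * (M * (s - t) ^ α) :=
        (H.nf.lip (Y s) (Y t)).trans (by gcongr)
      have k3 := clm_bd _ _ kf kx
      have e1 : Y t - Y s - (f (Y s)) (X t - X s)
          = (f (Y s) - f (Y t)) (X s - X t) - (Y s - Y t - f (Y t) (X s - X t)) := by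
        rw [← neg_sub (X s) (X t), map_neg, sub_apply]; abel
      show ‖Y t - Y s - (f (Y s)) (X t - X s)‖ ≤ _
      rw [e1]
      refine (norm_sub_le _ _).trans ?_
      linarith
  · have hc := davie_conv (Ξ := fun s t => dav f
      (fun x => ctL d e ((fderiv ℝ f x).comp (f x))) X XX s t (Y s)) hK0 hθ hK
    intro t ht ε hε
    obtain ⟨δ, hδ, h⟩ := hc t ht ε hε
    refine ⟨δ, hδ, fun k τ a1 a2 a3 a4 => ?_⟩
    rw [← hY0]
    exact h _ ⟨k, τ, a1, a2, a3, a4, rfl⟩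
  · rintro Z ⟨-, -, z3, z4⟩
    obtain ⟨R, hR0, hR⟩ := holder2_of_bdd (by intro s _ _; simp) z3
    obtain ⟨C', hC'0, hC'⟩ := H.germ hR0 hR
    have hconv : ConvRS (fun s t => dav f
        (fun x => ctL d e ((fderiv ℝ f x).comp (f x))) X XX s t (Z s)) T ξ Z := by
      intro t ht ε hε
      obtain ⟨δ, hδ, h⟩ := z4 t ht ε hε
      refine ⟨δ, hδ, ?_⟩
      rintro S ⟨k, τ, a1, a2, a3, a4, rfl⟩
      exact h k τ a1 a2 a3 a4
    have hZ0 := conv_init hT hconv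
    obtain ⟨K', hK'0, hK'⟩ := conv_davie hC'0 hθ hC' hconv
    have m1 : ∀ s t, 0 ≤ s → s ≤ t → t ≤ T → ‖AlmostFlow.err (dav f
        (fun x => ctL d e ((fderiv ℝ f x).comp (f x))) X XX) Y s t‖
        ≤ (K + K') * (t - s) ^ (3 * α) := by
      intro s t h0 h1 h2
      have := Real.rpow_nonneg (sub_nonneg.2 h1) (3 * α)
      refine (hK s t h0 h1 h2).trans ?_
      gcongr
      linarith
    have m2 : ∀ s t, 0 ≤ s → s ≤ t → t ≤ T → ‖AlmostFlow.err (dav f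
        (fun x => ctL d e ((fderiv ℝ f x).comp (f x))) X XX) Z s t‖
        ≤ (K + K') * (t - s) ^ (3 * α) := by
      intro s t h0 h1 h2
      have := Real.rpow_nonneg (sub_nonneg.2 h1) (3 * α)
      rcases h1.eq_or_lt with rfl | h1
      · rw [AF.err_self Z s h0 h2, norm_zero]
        positivity
      · refine (hK' s t h0 h1 h2).trans ?_
        gcongr
        linarith
    intro t ht
    exact AF.unique (add_nonneg hK0 hK'0) m1 m2 (by rw [hZ0, hY0]) t ht.1 ht.2

end
end

section
/- Let s < t be dyadic rationals in [0,1] and let m ≥ 0 be the integer with 2^{−m−1} < t − s ≤ 2^{−m}. Then there exists a partition s = τ₀ < τ₁ < … < τ_N = t of [s,t] such that every interval [τ_i, τ_{i+1}] is a dyadic interval of the form [j·2^{−k}, (j+1)·2^{−k}] for some integers k ≥ m+1 and 0 ≤ j < 2^k, and moreover, for each fixed k ≥ m+1, at most two of the intervals [τ_i, τ_{i+1}] have length 2^{−k}. -/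
/-- `x` is a dyadic rational in `[0,1]`, i.e. `x = i·2⁻ⁿ` for some `n` and `0 ≤ i ≤ 2ⁿ`. -/
def IsDyadic (x : ℝ) : Prop :=
  ∃ n i : ℕ, i ≤ 2 ^ n ∧ x = i * (1 / 2 : ℝ) ^ n

/-- dyadic partition of `[s,t]` with levels at least `m+1` and counts bounded by `c` -/
def DPart (m : ℕ) (s t : ℝ) (c : ℕ → ℕ) : Prop :=
  ∃ (N : ℕ) (τ : ℕ → ℝ), τ 0 = s ∧ τ N = t ∧
      (∀ i < N, ∃ k j : ℕ, m + 1 ≤ k ∧ j < 2 ^ k ∧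
        τ i = j * (1 / 2 : ℝ) ^ k ∧ τ (i + 1) = (j + 1) * (1 / 2 : ℝ) ^ k) ∧
      (∀ k : ℕ, ((Finset.range N).filter
          (fun i => τ (i + 1) - τ i = (1 / 2 : ℝ) ^ k)).card ≤ c k)

lemma DPart.mono {m : ℕ} {s t : ℝ} {c d : ℕ → ℕ} (h : DPart m s t c) (hcd : ∀ k, c k ≤ d k) :
    DPart m s t d := by
  obtain ⟨N, τ, h0, hN, h1, h2⟩ := h
  exact ⟨N, τ, h0, hN, h1, fun k => (h2 k).trans (hcd k)⟩

lemma DPart.nil (m : ℕ) (s : ℝ) (c : ℕ → ℕ) : DPart m s s c :=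
  ⟨0, fun _ => s, rfl, rfl, by simp, by simp⟩

lemma DPart.single (m n j : ℕ) (hn : m + 1 ≤ n) (hj : j < 2 ^ n) :
    DPart m (j * (1 / 2 : ℝ) ^ n) ((j + 1 : ℕ) * (1 / 2 : ℝ) ^ n)
      (fun k => if k = n then 1 else 0) := by
  refine ⟨1, fun i => ((j + i : ℕ) : ℝ) * (1 / 2 : ℝ) ^ n, by simp, by simp, ?_, ?_⟩
  · intro i hi
    obtain rfl : i = 0 := by omega
    exact ⟨n, j, hn, hj, by simp, by simp⟩
  · intro k
    dsimp only
    split_ifs with h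
    · exact (Finset.card_filter_le _ _).trans (by simp)
    · rw [Nat.le_zero, Finset.card_eq_zero, Finset.filter_eq_empty_iff]
      intro i hi he
      apply h
      have h3 : (1 / 2 : ℝ) ^ n = (1 / 2 : ℝ) ^ k := by
        rw [← he]; push_cast; ring
      exact (pow_right_injective₀ (by norm_num) (by norm_num) h3).symm

lemma DPart.trans {m : ℕ} {s u t : ℝ} {c d : ℕ → ℕ} (h : DPart m s u c) (h' : DPart m u t d) :
    DPart m s t (fun k => c k + d k) := by
  obtain ⟨N, τ, h0, hN, h1, h2⟩ := h
  obtain ⟨M, σ, g0, gM, g1, g2⟩ := h'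
  set ρ : ℕ → ℝ := fun i => if i ≤ N then τ i else σ (i - N) with hρ
  have ha : ∀ i ≤ N, ρ i = τ i := fun i hi => by simp [hρ, hi]
  have hb : ∀ i, ρ (N + i) = σ i := by
    intro i
    rcases Nat.eq_zero_or_pos i with rfl | hi
    · simp [hρ, hN, g0]
    · have : ¬ (N + i ≤ N) := by omega
      simp only [hρ, if_neg this]
      congr 1; omega
  refine ⟨N + M, ρ, by rw [ha 0 (by omega), h0], by rw [hb, gM], ?_, ?_⟩
  · intro i hi
    by_cases hiN : i < N
    · rw [ha i hiN.le, ha (i + 1) hiN]; exact h1 i hiN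
    · obtain ⟨l, rfl⟩ := Nat.exists_eq_add_of_le (not_lt.mp hiN)
      rw [add_assoc, hb, hb]; exact g1 l (by omega)
  · intro k
    have e1 := h2 k
    have e2 := g2 k
    rw [Finset.card_filter] at e1 e2 ⊢
    rw [Finset.sum_range_add]
    refine add_le_add (le_trans (le_of_eq ?_) e1) (le_trans (le_of_eq ?_) e2)
    · refine Finset.sum_congr rfl fun i hi => ?_
      have hi := Finset.mem_range.mp hi
      rw [ha i hi.le, ha (i + 1) hi]
    · refine Finset.sum_congr rfl fun i hi => ?_
      rw [add_assoc, hb, hb]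

lemma dpart_main (m d : ℕ) : ∀ a b : ℕ, a ≤ b → b ≤ a + 2 ^ (d + 1) → b ≤ 2 ^ (m + 1 + d) →
    DPart m (a * (1 / 2 : ℝ) ^ (m + 1 + d)) (b * (1 / 2 : ℝ) ^ (m + 1 + d))
      (fun k => if k ≤ m + 1 + d then 2 else 0) := by
  induction d with
  | zero =>
    intro a b hab hb hb2
    have : b = a ∨ b = a + 1 ∨ b = a + 1 + 1 := by
      norm_num at hb; omega
    rcases this with rfl | rfl | rfl
    · exact DPart.nil _ _ _
    · refine (DPart.single m (m + 1 + 0) a (by omega) (by omega)).mono ?_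
      intro k; split_ifs <;> omega
    · refine ((DPart.single m (m + 1 + 0) a (by omega) (by omega)).trans
        (DPart.single m (m + 1 + 0) (a + 1) (by omega) (by omega))).mono ?_
      intro k; split_ifs <;> omega
  | succ d ih =>
    intro a b hab hb hb2
    rw [← add_assoc] at hb2 ⊢
    have key : ∀ x : ℕ, (x : ℝ) * (1 / 2 : ℝ) ^ (m + 1 + d)
        = ((2 * x : ℕ) : ℝ) * (1 / 2 : ℝ) ^ (m + 1 + d + 1) := by
      intro x; push_cast; ring
    rcases eq_or_lt_of_le hab with rfl | hlt
    · exact DPart.nil _ _ _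
    have hp : 2 ^ (d + 1 + 1) = 2 * 2 ^ (d + 1) := by ring
    have hp2 : 2 ^ (m + 1 + d + 1) = 2 * 2 ^ (m + 1 + d) := by ring
    have hmid := ih ((a + 1) / 2) (b / 2) (by omega) (by omega) (by omega)
    rw [key, key] at hmid
    have hl : DPart m (a * (1 / 2 : ℝ) ^ (m + 1 + d + 1))
        ((2 * ((a + 1) / 2) : ℕ) * (1 / 2 : ℝ) ^ (m + 1 + d + 1))
        (fun k => if k = m + 1 + d + 1 then 1 else 0) := by
      rcases Nat.even_or_odd' a with ⟨c, h | h⟩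
      · rw [show 2 * ((a + 1) / 2) = a by omega]; exact DPart.nil _ _ _
      · rw [show 2 * ((a + 1) / 2) = a + 1 by omega]
        exact DPart.single _ _ _ (by omega) (by omega)
    have hr : DPart m ((2 * (b / 2) : ℕ) * (1 / 2 : ℝ) ^ (m + 1 + d + 1))
        (b * (1 / 2 : ℝ) ^ (m + 1 + d + 1))
        (fun k => if k = m + 1 + d + 1 then 1 else 0) := by
      rcases Nat.even_or_odd' b with ⟨c, h | h⟩
      · rw [show 2 * (b / 2) = b by omega]; exact DPart.nil _ _ _
      · have := DPart.single m (m + 1 + d + 1) (2 * (b / 2)) (by omega) (by omega)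
        rwa [show 2 * (b / 2) + 1 = b by omega] at this
    refine ((hl.trans hmid).trans hr).mono ?_
    intro k; split_ifs <;> omega

lemma IsDyadic.lift {n i : ℕ} (hi : i ≤ 2 ^ n) (l : ℕ) :
    i * 2 ^ l ≤ 2 ^ (n + l) ∧
      (i : ℝ) * (1 / 2 : ℝ) ^ n = ((i * 2 ^ l : ℕ) : ℝ) * (1 / 2 : ℝ) ^ (n + l) := by
  constructor
  · rw [pow_add]; exact Nat.mul_le_mul_right _ hi
  · push_cast
    rw [pow_add, mul_mul_mul_comm, mul_comm ((2 : ℝ) ^ l), mul_assoc, ← mul_pow]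
    norm_num

/-- for dyadic rationals `s < t` in `[0,1]` and `m` with
`2^{−m−1} < t − s ≤ 2^{−m}`, there is a partition `s = τ₀ < … < τ_N = t` all of whose
intervals are dyadic intervals of level `k ≥ m+1`, with at most two intervals of each
level `k`. -/
theorem dyadic_partition_exists (s t : ℝ) (hds : IsDyadic s) (hdt : IsDyadic t)
    (hst : s < t) (m : ℕ)
    (hm1 : (1 / 2 : ℝ) ^ (m + 1) < t - s) (hm2 : t - s ≤ (1 / 2 : ℝ) ^ m) :
    ∃ (N : ℕ) (τ : ℕ → ℝ), 1 ≤ N ∧ τ 0 = s ∧ τ N = t ∧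
      (∀ i < N, τ i < τ (i + 1)) ∧
      (∀ i < N, ∃ k j : ℕ, m + 1 ≤ k ∧ j < 2 ^ k ∧
        τ i = j * (1 / 2 : ℝ) ^ k ∧ τ (i + 1) = (j + 1) * (1 / 2 : ℝ) ^ k) ∧
      (∀ k : ℕ, m + 1 ≤ k →
        ((Finset.range N).filter
          (fun i => τ (i + 1) - τ i = (1 / 2 : ℝ) ^ k)).card ≤ 2) := by
  obtain ⟨n, a, ha, rfl⟩ := hds
  obtain ⟨n', b, hb, rfl⟩ := hdt
  obtain ⟨ha', ea⟩ := IsDyadic.lift ha (m + 1 + n')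
  obtain ⟨hb', eb⟩ := IsDyadic.lift hb (m + 1 + n)
  have e1 : n + (m + 1 + n') = m + 1 + (n + n') := by omega
  have e2 : n' + (m + 1 + n) = m + 1 + (n + n') := by omega
  rw [e1] at ha' ea
  rw [e2] at hb' eb
  rw [ea, eb] at hst hm1 hm2 ⊢
  generalize a * 2 ^ (m + 1 + n') = A at *
  generalize b * 2 ^ (m + 1 + n) = B at *
  generalize n + n' = d at *
  have hpos : (0 : ℝ) < (1 / 2 : ℝ) ^ (m + 1 + d) := by positivity
  have hAB : A < B := by
    have := lt_of_mul_lt_mul_right hst hpos.le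
    exact_mod_cast this
  have hBA : B ≤ A + 2 ^ (d + 1) := by
    have h3 : (1 / 2 : ℝ) ^ m = 2 ^ (d + 1) * (1 / 2 : ℝ) ^ (m + 1 + d) := by
      rw [show m + 1 + d = m + (d + 1) by omega, pow_add (1 / 2 : ℝ), mul_left_comm, ← mul_pow]
      norm_num
    rw [h3, ← sub_mul] at hm2
    have h4 := le_of_mul_le_mul_right hm2 hpos
    have h5 : (B : ℝ) ≤ A + 2 ^ (d + 1) := by linarith
    exact_mod_cast h5
  obtain ⟨N, τ, h0, hN, h1, h2⟩ := dpart_main m d A B hAB.le hBA hb'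
  refine ⟨N, τ, ?_, h0, hN, ?_, h1, ?_⟩
  · rcases Nat.eq_zero_or_pos N with rfl | h
    · rw [← h0, ← hN] at hst; exact absurd hst (lt_irrefl _)
    · exact h
  · intro i hi
    obtain ⟨k, j, -, -, e, e'⟩ := h1 i hi
    rw [e, e']
    have : (0 : ℝ) < (1 / 2 : ℝ) ^ k := by positivity
    linarith
  · intro k _
    refine (h2 k).trans ?_
    dsimp only
    split_ifs <;> omega
end

section
/- Let X : [0,1] → ℝ and for each n ≥ 0 set K_n := max { |X_{t+2^{−n}} − X_t| : t ∈ D_n, t + 2^{−n} ≤ 1 }. Suppose that for some α ≥ 0 the series K_α := 2·Σ_{n≥0} 2^{nα} K_n converges. Then for all dyadic rationals s < t in [0,1], if m is the integer with 2^{−m−1} < t−s ≤ 2^{−m}, one has |X_t − X_s| ≤ 2·Σ_{n≥m+1} K_n, and consequently |X_t − X_s| ≤ K_α · |t−s|^α for all dyadic rationals s, t in [0,1]. -/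
noncomputable section

/-- `K_n := max { |X_{t,t+2⁻ⁿ}| : t ∈ D_n, t + 2⁻ⁿ ≤ 1 }`. -/
def dyadicMaxInc (X : ℝ → ℝ) (n : ℕ) : ℝ :=
  (Finset.range (2 ^ n)).sup'
    ⟨0, Finset.mem_range.mpr (by positivity)⟩
    (fun i => |X ((i + 1) * (1 / 2 : ℝ) ^ n) - X (i * (1 / 2 : ℝ) ^ n)|)

lemma dyadicMaxInc_step (X : ℝ → ℝ) (n i : ℕ) (hi : i < 2 ^ n) :
    |X (((i + 1 : ℕ) : ℝ) * (1 / 2 : ℝ) ^ n) - X (i * (1 / 2 : ℝ) ^ n)| ≤ dyadicMaxInc X n := by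
  have h := Finset.le_sup' (s := Finset.range (2 ^ n))
    (fun i : ℕ => |X (((i : ℝ) + 1) * (1 / 2 : ℝ) ^ n) - X (i * (1 / 2 : ℝ) ^ n)|)
    (Finset.mem_range.mpr hi)
  push_cast
  exact h

lemma dyadicMaxInc_nonneg (X : ℝ → ℝ) (n : ℕ) : 0 ≤ dyadicMaxInc X n :=
  (abs_nonneg _).trans (dyadicMaxInc_step X n 0 (by positivity))

lemma dyadic_refine (i n : ℕ) :
    ((2 * i : ℕ) : ℝ) * (1 / 2 : ℝ) ^ (n + 1) = (i : ℝ) * (1 / 2 : ℝ) ^ n := by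
  push_cast
  ring

lemma dyadic_chain (X : ℝ → ℝ) (M d : ℕ) : ∀ i j : ℕ, i ≤ j → j ≤ 2 ^ (M + d) →
    j ≤ i + 2 * 2 ^ d →
    |X (j * (1 / 2 : ℝ) ^ (M + d)) - X (i * (1 / 2 : ℝ) ^ (M + d))| ≤
      2 * ∑ k ∈ Finset.range (d + 1), dyadicMaxInc X (k + M) := by
  induction d with
  | zero =>
    intro i j hij hj hd
    have h0 := dyadicMaxInc_nonneg X M
    simp only [add_zero, zero_add, Finset.sum_range_one, pow_zero, mul_one] at *
    obtain rfl | rfl | rfl : j = i ∨ j = i + 1 ∨ j = i + 1 + 1 := by omega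
    · simp [h0]
    · have := dyadicMaxInc_step X M i (by omega)
      linarith
    · have h1 := dyadicMaxInc_step X M i (by omega)
      have h2 := dyadicMaxInc_step X M (i + 1) (by omega)
      have := abs_sub_le (X (((i + 1 + 1 : ℕ) : ℝ) * (1 / 2 : ℝ) ^ M))
        (X (((i + 1 : ℕ) : ℝ) * (1 / 2 : ℝ) ^ M)) (X (i * (1 / 2 : ℝ) ^ M))
      linarith
  | succ d ih =>
    intro i j hij hj hd
    have h0 := dyadicMaxInc_nonneg X (M + (d + 1))
    have hp : 2 ^ (M + (d + 1)) = 2 * 2 ^ (M + d) := by ring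
    have hp' : 2 ^ (d + 1) = 2 * 2 ^ d := by ring
    rcases hij.eq_or_lt with rfl | hlt
    · simp only [sub_self, abs_zero]
      have : 0 ≤ ∑ k ∈ Finset.range (d + 1 + 1), dyadicMaxInc X (k + M) :=
        Finset.sum_nonneg fun k _ => dyadicMaxInc_nonneg X _
      linarith
    obtain ⟨i', hi'⟩ : ∃ i', 2 * i' = i ∨ 2 * i' = i + 1 := ⟨(i + 1) / 2, by omega⟩
    obtain ⟨j', hj'⟩ : ∃ j', 2 * j' = j ∨ 2 * j' + 1 = j := ⟨j / 2, by omega⟩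
    have main := ih i' j' (by omega) (by omega) (by omega)
    rw [← dyadic_refine j' (M + d), ← dyadic_refine i' (M + d)] at main
    rw [Finset.sum_range_succ, add_comm (d + 1) M]
    have e1 : |X (((2 * i' : ℕ) : ℝ) * (1 / 2 : ℝ) ^ (M + (d + 1)))
        - X (i * (1 / 2 : ℝ) ^ (M + (d + 1)))| ≤ dyadicMaxInc X (M + (d + 1)) := by
      rcases hi' with h | h
      · rw [h]; simpa using h0
      · rw [h]; exact dyadicMaxInc_step X _ i (by omega)
    have e2 : |X (j * (1 / 2 : ℝ) ^ (M + (d + 1))) -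
        X (((2 * j' : ℕ) : ℝ) * (1 / 2 : ℝ) ^ (M + (d + 1)))| ≤ dyadicMaxInc X (M + (d + 1)) := by
      rcases hj' with h | h
      · rw [h]; simpa using h0
      · rw [← h]; exact dyadicMaxInc_step X _ (2 * j') (by omega)
    have t1 := abs_sub_le (X (j * (1 / 2 : ℝ) ^ (M + (d + 1))))
      (X (((2 * j' : ℕ) : ℝ) * (1 / 2 : ℝ) ^ (M + (d + 1)))) (X (i * (1 / 2 : ℝ) ^ (M + (d + 1))))
    have t2 := abs_sub_le (X (((2 * j' : ℕ) : ℝ) * (1 / 2 : ℝ) ^ (M + (d + 1))))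
      (X (((2 * i' : ℕ) : ℝ) * (1 / 2 : ℝ) ^ (M + (d + 1)))) (X (i * (1 / 2 : ℝ) ^ (M + (d + 1))))
    rw [add_assoc] at main
    linarith

lemma dyadic_level {s : ℝ} {a i : ℕ} (c : ℕ) (h : s = i * (1 / 2 : ℝ) ^ a) :
    s = ((i * 2 ^ c : ℕ) : ℝ) * (1 / 2 : ℝ) ^ (a + c) := by
  rw [h, pow_add]
  push_cast
  have : (2 : ℝ) ^ c * (1 / 2) ^ c = 1 := by rw [← mul_pow]; norm_num
  linear_combination (-(i : ℝ) * (1 / 2) ^ a) * this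

lemma dyadic_first (X : ℝ → ℝ) (hK : Summable (dyadicMaxInc X)) (s t : ℝ)
    (hs : IsDyadic s) (ht : IsDyadic t) (hst : s < t) (m : ℕ) (hm : t - s ≤ (1 / 2 : ℝ) ^ m) :
    |X t - X s| ≤ 2 * ∑' n : ℕ, dyadicMaxInc X (n + (m + 1)) := by
  obtain ⟨a, i, hi, hs⟩ := hs
  obtain ⟨b, j, hj, ht⟩ := ht
  have hs' := dyadic_level (b + (m + 1)) hs
  have ht' := dyadic_level (a + (m + 1)) ht
  rw [show a + (b + (m + 1)) = m + 1 + (a + b) by ring] at hs'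
  rw [show b + (a + (m + 1)) = m + 1 + (a + b) by ring] at ht'
  have hj2 : j * 2 ^ (a + (m + 1)) ≤ 2 ^ (m + 1 + (a + b)) := by
    calc _ ≤ 2 ^ b * 2 ^ (a + (m + 1)) := Nat.mul_le_mul_right _ hj
      _ = _ := by ring
  generalize i * 2 ^ (b + (m + 1)) = p at *
  generalize j * 2 ^ (a + (m + 1)) = q at *
  have hpos : (0 : ℝ) < (1 / 2) ^ (m + 1 + (a + b)) := by positivity
  have hpq : p ≤ q := by
    have : (p : ℝ) < q := by
      rw [hs', ht'] at hst
      exact lt_of_mul_lt_mul_right hst hpos.le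
    exact_mod_cast this.le
  have hd : q ≤ p + 2 * 2 ^ (a + b) := by
    have : (q : ℝ) ≤ p + 2 * 2 ^ (a + b) := by
      have e : (1 / 2 : ℝ) ^ m = (2 * 2 ^ (a + b)) * (1 / 2) ^ (m + 1 + (a + b)) := by
        have : (2 : ℝ) ^ (a + b) * (1 / 2) ^ (a + b) = 1 := by rw [← mul_pow]; norm_num
        rw [pow_add (1 / 2 : ℝ) (m + 1) (a + b), pow_add (1 / 2 : ℝ) m 1]
        linear_combination (-(1 / 2 : ℝ) ^ m) * this
      rw [hs', ht', e] at hm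
      refine le_of_mul_le_mul_right ?_ hpos
      linarith
    exact_mod_cast this
  have main := dyadic_chain X (m + 1) (a + b) p q hpq hj2 hd
  rw [← hs', ← ht'] at main
  refine main.trans ?_
  have := ((summable_nat_add_iff (m + 1)).mpr hK).sum_le_tsum (Finset.range (a + b + 1))
    (fun k _ => dyadicMaxInc_nonneg X _)
  linarith

lemma IsDyadic.mem {x : ℝ} (h : IsDyadic x) : 0 ≤ x ∧ x ≤ 1 := by
  obtain ⟨n, i, hi, rfl⟩ := h
  refine ⟨by positivity, ?_⟩
  have h1 : (i : ℝ) ≤ 2 ^ n := by exact_mod_cast hi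
  calc (i : ℝ) * (1 / 2) ^ n ≤ 2 ^ n * (1 / 2) ^ n := by gcongr
    _ = 1 := by rw [← mul_pow]; norm_num

/-- if `K_α := 2·Σ_{n≥0} 2^{nα} K_n` converges, then for dyadic `s < t`
with `2^{−m−1} < t−s ≤ 2^{−m}` one has `|X_t − X_s| ≤ 2·Σ_{n≥m+1} K_n`, and consequently
`|X_t − X_s| ≤ K_α·|t−s|^α` for all dyadic `s, t` in `[0,1]`. -/
theorem dyadic_holder_bound (X : ℝ → ℝ) (α : ℝ) (hα : 0 ≤ α)
    (hsum : Summable (fun n : ℕ => ((2 : ℝ) ^ α) ^ n * dyadicMaxInc X n)) :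
    (∀ s t : ℝ, IsDyadic s → IsDyadic t → s < t → ∀ m : ℕ,
      (1 / 2 : ℝ) ^ (m + 1) < t - s → t - s ≤ (1 / 2 : ℝ) ^ m →
      |X t - X s| ≤ 2 * ∑' n : ℕ, dyadicMaxInc X (n + (m + 1))) ∧
    (∀ s t : ℝ, IsDyadic s → IsDyadic t →
      |X t - X s| ≤ (2 * ∑' n : ℕ, ((2 : ℝ) ^ α) ^ n * dyadicMaxInc X n) * |t - s| ^ α) := by
  have hc : 1 ≤ (2 : ℝ) ^ α := Real.one_le_rpow (by norm_num) hα
  have hK : Summable (dyadicMaxInc X) :=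
    Summable.of_nonneg_of_le (dyadicMaxInc_nonneg X)
      (fun n => le_mul_of_one_le_left (dyadicMaxInc_nonneg X n) (one_le_pow₀ hc)) hsum
  have hnn : ∀ n, 0 ≤ ((2 : ℝ) ^ α) ^ n * dyadicMaxInc X n :=
    fun n => mul_nonneg (by positivity) (dyadicMaxInc_nonneg X n)
  refine ⟨fun s t hs ht hst m _ hm => dyadic_first X hK s t hs ht hst m hm, ?_⟩
  have key : ∀ s t : ℝ, IsDyadic s → IsDyadic t → s < t →
      |X t - X s| ≤ (2 * ∑' n : ℕ, ((2 : ℝ) ^ α) ^ n * dyadicMaxInc X n) * |t - s| ^ α := by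
    intro s t hs ht hst
    obtain ⟨m, hm1, hm2⟩ := exists_nat_pow_near_of_lt_one (x := t - s) (y := (1 / 2 : ℝ))
      (by linarith) (by linarith [hs.mem.1, ht.mem.2]) (by norm_num) (by norm_num)
    refine (dyadic_first X hK s t hs ht hst m hm2).trans ?_
    rw [abs_of_pos (sub_pos.mpr hst), mul_assoc, ← tsum_mul_right]
    refine mul_le_mul_of_nonneg_left ?_ (by norm_num)
    have hts : 0 ≤ (t - s) ^ α := Real.rpow_nonneg (by linarith) _
    have hS := hsum.mul_right ((t - s) ^ α)
    have hpow : 1 ≤ ((2 : ℝ) ^ α) ^ (m + 1) * (t - s) ^ α := by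
      have h1 : ((1 / 2 : ℝ) ^ (m + 1)) ^ α ≤ (t - s) ^ α :=
        Real.rpow_le_rpow (by positivity) hm1.le hα
      have h2 : ((2 : ℝ) ^ α) ^ (m + 1) * ((1 / 2 : ℝ) ^ (m + 1)) ^ α = 1 := by
        rw [← Real.rpow_pow_comm (by norm_num : (0 : ℝ) ≤ 1 / 2), ← mul_pow,
          ← Real.mul_rpow (by norm_num) (by norm_num)]
        norm_num
      calc (1 : ℝ) = _ := h2.symm
        _ ≤ _ := by gcongr
    rw [← hS.sum_add_tsum_nat_add (m + 1)]
    have hfin : 0 ≤ ∑ n ∈ Finset.range (m + 1),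
        ((2 : ℝ) ^ α) ^ n * dyadicMaxInc X n * (t - s) ^ α :=
      Finset.sum_nonneg fun n _ => mul_nonneg (hnn n) hts
    have hle : ∑' n : ℕ, dyadicMaxInc X (n + (m + 1)) ≤ ∑' n : ℕ,
        ((2 : ℝ) ^ α) ^ (n + (m + 1)) * dyadicMaxInc X (n + (m + 1)) * (t - s) ^ α := by
      have s1 : Summable (fun n => dyadicMaxInc X (n + (m + 1))) :=
        (summable_nat_add_iff (f := dyadicMaxInc X) (m + 1)).mpr hK
      have s2 : Summable (fun n : ℕ => ((2 : ℝ) ^ α) ^ (n + (m + 1)) *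
          dyadicMaxInc X (n + (m + 1)) * (t - s) ^ α) :=
        (summable_nat_add_iff
          (f := fun n : ℕ => ((2 : ℝ) ^ α) ^ n * dyadicMaxInc X n * (t - s) ^ α) (m + 1)).mpr hS
      refine Summable.tsum_le_tsum (fun n => ?_) s1 s2
      have h3 : 1 ≤ ((2 : ℝ) ^ α) ^ n * (((2 : ℝ) ^ α) ^ (m + 1) * (t - s) ^ α) :=
        one_le_mul_of_one_le_of_one_le (one_le_pow₀ hc) hpow
      have h4 := dyadicMaxInc_nonneg X (n + (m + 1))
      generalize dyadicMaxInc X (n + (m + 1)) = K at h4 ⊢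
      have h5 := le_mul_of_one_le_left h4 h3
      rw [pow_add]
      linarith
    linarith
  intro s t hs ht
  rcases lt_trichotomy s t with h | rfl | h
  · exact key s t hs ht h
  · rw [sub_self, abs_zero]
    exact mul_nonneg (mul_nonneg (by norm_num) (tsum_nonneg hnn))
      (Real.rpow_nonneg (abs_nonneg _) _)
  · rw [abs_sub_comm, abs_sub_comm t s]
    exact key t s ht hs h

end
end
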